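/- Let Λ = (λ_k)_{k∈ℕ} be a strictly increasing sequence of positive real numbers satisfying the gap condition and the Müntz condition, and let 1 ≤ p < ∞. Then for every β ≥ 0, α > 0 and every finite subset Ξ of (0,∞), the Müntz spaces M_{Λ,p}([0,1]) and M_{Ξ ∪ (αΛ+β),p}([0,1]) are linearly topologically isomorphic, where αΛ+β = { αλ + β : λ ∈ Λ }. -/

import Mathlib

open MeasureTheory Filter
open scoped ENNReal NNReal Topology

/-- The Müntz space `M_{S,p}([a,b])`: the closure in `L_p([a,b],ℝ)` of the linear span of
the monomials `t ↦ t ^ λ`, `λ ∈ S`. -/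
noncomputable def muntzSpace (S : Set ℝ) (p : ℝ≥0∞) [Fact (1 ≤ p)] (a b : ℝ) :
    Submodule ℝ (Lp ℝ p (volume.restrict (Set.Icc a b))) :=
  (Submodule.span ℝ {g : Lp ℝ p (volume.restrict (Set.Icc a b)) |
    ∃ lam ∈ S, (g : ℝ → ℝ) =ᵐ[volume.restrict (Set.Icc a b)] fun t => t ^ lam}).topologicalClosure

/-!
Over a finite set of exponents the Gram form of the monomials in `L₂([0,1])` is a Cauchy form, which
bounds each coefficient by an explicit product. The gap and Müntz conditions make this product grow
at most exponentially: the coefficient of `t ^ λ` in a Müntz polynomial is at most `exp (K * λ)`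
times its `L_p` norm. So near `0` the polynomials with exponents `Λ` and `α * Λ + β` sharing their
coefficients are both controlled by either `L_p` norm, while away from `0` the substitution
`t ↦ t ^ α` and the factor `t ^ β` distort norms by bounded factors. Hence
`t ^ λ ↦ t ^ (α * λ + β)` extends to an isomorphism.

The monomials form a gliding hump: along a sparse subsequence they are tiny perturbations of
disjointly supported functions, so the Müntz space contains a complemented copy of `ℓ_p`. As
`ℓ_p ≃ ℓ_p × ℝ`, the space absorbs one more dimension, and therefore any finite set of exponents.
-/

section CauchyForm

variable {ι : Type*}

/-- The quadratic form of the Cauchy matrix `(1 / (x i + x j))`. For `x i = l i + 1 / 2` it is the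
Gram form of the monomials `t ^ l i` in `L₂([0,1])`. -/
noncomputable def cauchyForm (s : Finset ι) (x a : ι → ℝ) : ℝ :=
  ∑ i ∈ s, ∑ j ∈ s, a i * a j / (x i + x j)

variable {s : Finset ι} {x : ι → ℝ}

theorem cauchyForm_eq_add_sq (hx : ∀ i ∈ s, 0 < x i) (a : ι → ℝ) {y : ℝ} (hy : 0 < y) :
    cauchyForm s x a = cauchyForm s x (fun i => a i * ((x i - y) / (x i + y)))
      + 2 * y * (∑ i ∈ s, a i / (x i + y)) ^ 2 := by
  rw [cauchyForm, cauchyForm, sq, Finset.sum_mul_sum]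
  simp only [Finset.mul_sum, ← Finset.sum_add_distrib]
  refine Finset.sum_congr rfl fun i hi => Finset.sum_congr rfl fun j hj => ?_
  have hi' := hx i hi
  have hj' := hx j hj
  have h₁ : x i + x j ≠ 0 := by positivity
  have h₂ : x i + y ≠ 0 := by positivity
  have h₃ : x j + y ≠ 0 := by positivity
  field_simp
  ring

theorem cauchyForm_mul_prod_le (hx : ∀ i ∈ s, 0 < x i) (a : ι → ℝ) {t : Finset ι} (ht : t ⊆ s) :
    cauchyForm s x (fun i => a i * ∏ m ∈ t, (x i - x m) / (x i + x m)) ≤ cauchyForm s x a := by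
  classical
  induction t using Finset.induction_on with
  | empty => simp
  | insert m t hm ih =>
    obtain ⟨hms, ht⟩ := Finset.insert_subset_iff.1 ht
    have hm' := hx m hms
    refine le_trans ?_ (ih ht)
    rw [cauchyForm_eq_add_sq hx (fun i => a i * ∏ m ∈ t, (x i - x m) / (x i + x m)) hm']
    simp only [Finset.prod_insert hm, mul_assoc, mul_comm (∏ _ ∈ t, _)]
    exact le_add_of_nonneg_right (by positivity)

/-- Successive contractions by the factors `(x i - x m) / (x i + x m)`, `m ≠ k`, kill every
coefficient but the `k`-th. -/
theorem sq_coeff_mul_prod_le_cauchyForm [DecidableEq ι] (hx : ∀ i ∈ s, 0 < x i) (a : ι → ℝ) {k : ι}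
    (hk : k ∈ s) :
    (a k * ∏ m ∈ s.erase k, (x k - x m) / (x k + x m)) ^ 2 / (2 * x k) ≤ cauchyForm s x a := by
  refine le_trans (le_of_eq ?_) (cauchyForm_mul_prod_le hx a (s.erase_subset k))
  have hzero : ∀ i ∈ s, i ≠ k → a i * ∏ m ∈ s.erase k, (x i - x m) / (x i + x m) = 0 :=
    fun i hi hik => by rw [Finset.prod_eq_zero (i := i) (by simp [hi, hik]) (by simp), mul_zero]
  rw [cauchyForm,
    Finset.sum_eq_single_of_mem k hk fun i hi hik => by
      simp only [hzero i hi hik, zero_mul, zero_div, Finset.sum_const_zero],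
    Finset.sum_eq_single_of_mem k hk fun j hj hjk => by rw [hzero j hj hjk, mul_zero, zero_div],
    sq, two_mul]

theorem cauchyForm_nonneg (hx : ∀ i ∈ s, 0 < x i) (a : ι → ℝ) : 0 ≤ cauchyForm s x a := by
  classical
  rcases s.eq_empty_or_nonempty with rfl | ⟨k, hk⟩
  · simp [cauchyForm]
  · have := hx k hk
    exact le_trans (by positivity) (sq_coeff_mul_prod_le_cauchyForm hx a hk)

theorem sq_coeff_le_mul_cauchyForm [DecidableEq ι] (hx : ∀ i ∈ s, 0 < x i)
    (hinj : Set.InjOn x s) (a : ι → ℝ) {k : ι} (hk : k ∈ s) :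
    a k ^ 2 ≤ 2 * x k * (∏ j ∈ s.erase k, (x j + x k) / |x j - x k|) ^ 2 * cauchyForm s x a := by
  have hxk := hx k hk
  have hinv : (∏ m ∈ s.erase k, (x k - x m) / (x k + x m)) ^ 2
      * (∏ j ∈ s.erase k, (x j + x k) / |x j - x k|) ^ 2 = 1 := by
    rw [← mul_pow, ← Finset.prod_mul_distrib, ← Finset.prod_pow]
    refine Finset.prod_eq_one fun j hj => ?_
    have hj' := Finset.mem_of_mem_erase hj
    have hxj := hx j hj'
    have hne : x j - x k ≠ 0 := sub_ne_zero.2 (hinj.ne hj' hk (Finset.ne_of_mem_erase hj))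
    have hadd : x k + x j ≠ 0 := by positivity
    rw [mul_pow, div_pow, div_pow, sq_abs, add_comm (x j)]
    field_simp
    ring
  have hform := (div_le_iff₀ (by positivity)).1 (sq_coeff_mul_prod_le_cauchyForm hx a hk)
  rw [mul_pow] at hform
  calc a k ^ 2 = a k ^ 2 * _ * _ := by rw [mul_assoc, hinv, mul_one]
    _ ≤ cauchyForm s x a * (2 * x k) * _ := mul_le_mul_of_nonneg_right hform (sq_nonneg _)
    _ = _ := by ring

end CauchyForm

/-- Sequences of exponents `0 < Λ 0 < Λ 1 < ⋯` satisfying the gap condition and the Müntz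
condition. -/
structure IsMuntzSeq (Λ : ℕ → ℝ) : Prop where
  pos : ∀ k, 0 < Λ k
  gap : ∃ c > 0, ∀ k, c ≤ Λ (k + 1) - Λ k
  summable : Summable fun k => 1 / Λ k

theorem monotone_sub_mul_of_gap {Λ : ℕ → ℝ} {c : ℝ} (hgap : ∀ k, c ≤ Λ (k + 1) - Λ k) :
    Monotone fun n : ℕ => Λ n - c * n :=
  monotone_nat_of_le_succ fun n => by push_cast; linarith [hgap n]

theorem mul_abs_sub_le_of_gap {Λ : ℕ → ℝ} {c : ℝ} (hgap : ∀ k, c ≤ Λ (k + 1) - Λ k) (j k : ℕ) :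
    c * |(j : ℝ) - k| ≤ |Λ j - Λ k| := by
  wlog hkj : k ≤ j generalizing j k
  · rw [abs_sub_comm (j : ℝ), abs_sub_comm (Λ j)]
    exact this k j (le_of_not_ge hkj)
  have hsub : Λ k - c * k ≤ Λ j - c * j := monotone_sub_mul_of_gap hgap hkj
  rw [abs_of_nonneg (sub_nonneg.2 (Nat.cast_le.2 hkj))]
  exact le_trans (by linarith) (le_abs_self _)

theorem tendsto_atTop_of_gap {Λ : ℕ → ℝ} {c : ℝ} (hc : 0 < c) (hgap : ∀ k, c ≤ Λ (k + 1) - Λ k) :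
    Tendsto Λ atTop atTop := by
  refine tendsto_atTop_mono (f := fun n : ℕ => Λ 0 + c * n) (fun n => ?_)
    (tendsto_atTop_add_const_left _ _ (tendsto_natCast_atTop_atTop.const_mul_atTop hc))
  have h := monotone_sub_mul_of_gap hgap n.zero_le
  simp only [Nat.cast_zero, mul_zero, sub_zero] at h
  linarith

theorem prod_range_max_one_div_le_exp {D : ℝ} (hD : 0 ≤ D) (n : ℕ) :
    ∏ i ∈ Finset.range n, max 1 (D / (i + 1)) ≤ Real.exp D := by
  induction n with
  | zero => simpa using Real.one_le_exp hD
  | succ n ih =>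
    rcases le_total D (n + 1) with h | h
    · rwa [Finset.prod_range_succ, max_eq_left ((div_le_one (by positivity)).2 h), mul_one]
    · have hmax : ∀ i ∈ Finset.range (n + 1), max 1 (D / ((i : ℝ) + 1)) = D / (i + 1) :=
        fun i hi => max_eq_right <| (one_le_div (by positivity)).2 <| le_trans
          (by gcongr; exact Nat.lt_succ_iff.1 (Finset.mem_range.1 hi)) h
      rw [Finset.prod_congr rfl hmax, Finset.prod_div_distrib, Finset.prod_const,
        Finset.card_range]
      convert Real.pow_div_factorial_le_exp D hD (n + 1)
      exact_mod_cast Finset.prod_range_add_one_eq_factorial (n + 1)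

theorem prod_erase_max_one_div_abs_sub_le_exp {D : ℝ} (hD : 0 ≤ D) (s : Finset ℕ) (k : ℕ) :
    ∏ j ∈ s.erase k, max 1 (D / |(j : ℝ) - k|) ≤ Real.exp (2 * D) := by
  obtain ⟨n, hn⟩ := s.exists_nat_subset_range
  have hsub : s.erase k ⊆ Finset.range k ∪ Finset.Ico (k + 1) n := fun j hj => by
    have := Finset.mem_range.1 (hn (Finset.mem_of_mem_erase hj))
    have := Finset.ne_of_mem_erase hj
    simp only [Finset.mem_union, Finset.mem_range, Finset.mem_Ico]
    omega
  have hdisj : Disjoint (Finset.range k) (Finset.Ico (k + 1) n) :=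
    Finset.disjoint_left.2 fun j hj hj' => by
      simp only [Finset.mem_range, Finset.mem_Ico] at hj hj'
      omega
  have hleft : ∏ j ∈ Finset.range k, max 1 (D / |(j : ℝ) - k|) ≤ Real.exp D := by
    rw [← Finset.prod_range_reflect]
    refine le_trans (le_of_eq (Finset.prod_congr rfl fun j hj => ?_))
      (prod_range_max_one_div_le_exp hD k)
    obtain ⟨d, rfl⟩ := Nat.exists_eq_add_of_lt (Finset.mem_range.1 hj)
    rw [show j + d + 1 - 1 - j = d by omega, abs_sub_comm, abs_of_nonneg (by push_cast; linarith)]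
    push_cast
    ring_nf
  have hright : ∏ j ∈ Finset.Ico (k + 1) n, max 1 (D / |(j : ℝ) - k|) ≤ Real.exp D := by
    rw [Finset.prod_Ico_eq_prod_range]
    refine le_trans (le_of_eq (Finset.prod_congr rfl fun j _ => ?_))
      (prod_range_max_one_div_le_exp hD (n - (k + 1)))
    rw [abs_of_nonneg (by push_cast; linarith)]
    push_cast
    ring_nf
  calc ∏ j ∈ s.erase k, max 1 (D / |(j : ℝ) - k|)
      ≤ ∏ j ∈ Finset.range k ∪ Finset.Ico (k + 1) n, max 1 (D / |(j : ℝ) - k|) :=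
        Finset.prod_le_prod_of_subset_of_one_le hsub (fun _ _ => by positivity)
          fun _ _ _ => le_max_left _ _
    _ ≤ Real.exp D * Real.exp D := by
        rw [Finset.prod_union hdisj]
        exact mul_le_mul hleft hright (Finset.prod_nonneg fun _ _ => by positivity) (by positivity)
    _ = Real.exp (2 * D) := by rw [← Real.exp_add, two_mul]

theorem add_div_abs_sub_le {c u v d : ℝ} (hc : 0 < c) (hu : 0 < u) (hv : 0 < v) (hd : 0 < d)
    (hcd : c * d ≤ |v - u|) :
    (v + u) / |v - u| ≤ max 1 (3 * u / c / d) * Real.exp (4 * u / v) := by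
  have : 0 < |v - u| := lt_of_lt_of_le (by positivity) hcd
  rcases lt_or_ge v (2 * u) with h | h
  · calc (v + u) / |v - u| ≤ 3 * u / (c * d) := by gcongr; linarith
      _ = 3 * u / c / d := by rw [div_div]
      _ ≤ max 1 (3 * u / c / d) * 1 := by rw [mul_one]; exact le_max_right _ _
      _ ≤ _ := by gcongr; exact Real.one_le_exp (by positivity)
  · calc (v + u) / |v - u| ≤ 4 * u / v + 1 := by
          rw [abs_of_pos (by linarith), div_add_one hv.ne', div_le_div_iff₀ (by linarith) hv]
          nlinarith
      _ ≤ 1 * Real.exp (4 * u / v) := by rw [one_mul]; exact Real.add_one_le_exp _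
      _ ≤ _ := by gcongr; exact le_max_left _ _

namespace IsMuntzSeq

variable {Λ : ℕ → ℝ}

theorem exists_prod_add_div_abs_sub_le_exp (hΛ : IsMuntzSeq Λ) :
    ∃ K, ∀ (s : Finset ℕ) (k : ℕ),
      ∏ j ∈ s.erase k, (Λ j + Λ k) / |Λ j - Λ k| ≤ Real.exp (K * Λ k) := by
  obtain ⟨c, hc, hgap⟩ := hΛ.gap
  refine ⟨6 / c + 4 * ∑' j, 1 / Λ j, fun s k => ?_⟩
  have hk := hΛ.pos k
  have hsum : ∑ j ∈ s.erase k, 4 * Λ k / Λ j ≤ 4 * Λ k * ∑' j, 1 / Λ j := by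
    simp only [div_eq_mul_one_div (4 * Λ k), ← Finset.mul_sum]
    gcongr
    exact hΛ.summable.sum_le_tsum _ fun j _ => (one_div_pos.2 (hΛ.pos j)).le
  calc ∏ j ∈ s.erase k, (Λ j + Λ k) / |Λ j - Λ k|
      ≤ ∏ j ∈ s.erase k, (max 1 (3 * Λ k / c / |(j : ℝ) - k|) * Real.exp (4 * Λ k / Λ j)) := by
        refine Finset.prod_le_prod (fun j _ => ?_) fun j hj => ?_
        · have := hΛ.pos j
          positivity
        · have hjk : (j : ℝ) - k ≠ 0 :=
            sub_ne_zero.2 (Nat.cast_injective.ne (Finset.ne_of_mem_erase hj))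
          exact add_div_abs_sub_le hc hk (hΛ.pos j) (abs_pos.2 hjk)
            (mul_abs_sub_le_of_gap hgap j k)
    _ ≤ Real.exp (2 * (3 * Λ k / c)) * Real.exp (4 * Λ k * ∑' j, 1 / Λ j) := by
        rw [Finset.prod_mul_distrib, ← Real.exp_sum]
        gcongr
        exact prod_erase_max_one_div_abs_sub_le_exp (by positivity) s k
    _ = Real.exp ((6 / c + 4 * ∑' j, 1 / Λ j) * Λ k) := by
        rw [← Real.exp_add]
        ring_nf

theorem strictMono (hΛ : IsMuntzSeq Λ) : StrictMono Λ := by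
  obtain ⟨c, hc, hgap⟩ := hΛ.gap
  exact strictMono_nat_of_lt_succ fun k => sub_pos.1 (hc.trans_le (hgap k))

theorem exists_sq_coeff_le_exp_mul_cauchyForm (hΛ : IsMuntzSeq Λ) :
    ∃ K, ∀ (s : Finset ℕ) (a : ℕ → ℝ), ∀ k ∈ s,
      a k ^ 2 ≤ Real.exp (K * Λ k) * cauchyForm s Λ a := by
  obtain ⟨K, hK⟩ := hΛ.exists_prod_add_div_abs_sub_le_exp
  refine ⟨2 + 2 * K, fun s a k hk => ?_⟩
  have hprod : 0 ≤ ∏ j ∈ s.erase k, (Λ j + Λ k) / |Λ j - Λ k| :=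
    Finset.prod_nonneg fun j _ => div_nonneg (add_pos (hΛ.pos j) (hΛ.pos k)).le (abs_nonneg _)
  calc a k ^ 2
      ≤ 2 * Λ k * (∏ j ∈ s.erase k, (Λ j + Λ k) / |Λ j - Λ k|) ^ 2 * cauchyForm s Λ a :=
        sq_coeff_le_mul_cauchyForm (fun i _ => hΛ.pos i) hΛ.strictMono.injective.injOn a hk
    _ ≤ Real.exp (2 * Λ k) * Real.exp (K * Λ k) ^ 2 * cauchyForm s Λ a := by
        gcongr
        · exact cauchyForm_nonneg (fun i _ => hΛ.pos i) a
        · linarith [Real.add_one_le_exp (2 * Λ k)]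
        · exact hK s k
    _ = Real.exp ((2 + 2 * K) * Λ k) * cauchyForm s Λ a := by
        rw [sq, ← Real.exp_add, ← Real.exp_add]
        ring_nf

theorem tendsto_atTop (hΛ : IsMuntzSeq Λ) : Tendsto Λ atTop atTop := by
  obtain ⟨c, hc, hgap⟩ := hΛ.gap
  exact tendsto_atTop_of_gap hc hgap

theorem not_bddAbove_range (hΛ : IsMuntzSeq Λ) : ¬BddAbove (Set.range Λ) :=
  not_bddAbove_of_tendsto_atTop hΛ.tendsto_atTop

theorem affine (hΛ : IsMuntzSeq Λ) {α β : ℝ} (hα : 0 < α) (hpos : ∀ k, 0 < α * Λ k + β) :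
    IsMuntzSeq fun k => α * Λ k + β where
  pos := hpos
  gap := by
    obtain ⟨c, hc, hgap⟩ := hΛ.gap
    refine ⟨α * c, by positivity, fun k => ?_⟩
    linarith [mul_le_mul_of_nonneg_left (hgap k) hα.le]
  summable := by
    refine (hΛ.summable.mul_left (2 / α)).of_norm_bounded_eventually_nat ?_
    filter_upwards [hΛ.tendsto_atTop.eventually_ge_atTop (2 * |β| / α)] with k hk
    have hk' : 2 * |β| ≤ Λ k * α := (div_le_iff₀ hα).1 hk
    have hΛk := hΛ.pos k
    rw [Real.norm_of_nonneg (one_div_pos.2 (hpos k)).le, div_mul_div_comm, mul_one,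
      div_le_div_iff₀ (hpos k) (by positivity)]
    linarith [neg_abs_le β]

end IsMuntzSeq

/-- The function `∑ i ∈ s, a i * t ^ l i`, a Müntz polynomial with exponents `l i`. -/
noncomputable def muntzPoly {ι : Type*} (s : Finset ι) (l a : ι → ℝ) (t : ℝ) : ℝ :=
  ∑ i ∈ s, a i * t ^ l i

section MuntzPoly

variable {ι : Type*} {s : Finset ι} {l : ι → ℝ}

theorem continuous_muntzPoly (hl : ∀ i ∈ s, 0 ≤ l i) (a : ι → ℝ) : Continuous (muntzPoly s l a) :=
  continuous_finsetSum _ fun i hi => (Real.continuous_rpow_const (hl i hi)).const_mul (a i)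

theorem integral_muntzPoly (hl : ∀ i ∈ s, -1 < l i) (a : ι → ℝ) (x : ℝ) :
    ∫ t in (0 : ℝ)..x, muntzPoly s l a t
      = muntzPoly s (fun i => l i + 1) (fun i => a i / (l i + 1)) x := by
  simp only [muntzPoly]
  rw [intervalIntegral.integral_finsetSum fun i hi =>
    (intervalIntegral.intervalIntegrable_rpow' (hl i hi)).const_mul (a i)]
  refine Finset.sum_congr rfl fun i hi => ?_
  have hli : 0 < l i + 1 := by linarith [hl i hi]
  rw [intervalIntegral.integral_const_mul, integral_rpow (Or.inl (hl i hi)),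
    Real.zero_rpow hli.ne', sub_zero, mul_div_assoc', div_mul_eq_mul_div]

theorem integral_muntzPoly_sq (hl : ∀ i ∈ s, -(1 / 2) < l i) (a : ι → ℝ) :
    ∫ t in (0 : ℝ)..1, muntzPoly s l a t ^ 2 = cauchyForm s (fun i => l i + 1 / 2) a := by
  have hadd : ∀ i ∈ s, ∀ j ∈ s, -1 < l i + l j := fun i hi j hj => by
    linarith [hl i hi, hl j hj]
  have hint : ∀ i ∈ s, ∀ j ∈ s, IntervalIntegrable
      (fun t : ℝ => a i * a j * t ^ (l i + l j)) volume 0 1 := fun i hi j hj =>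
    (intervalIntegral.intervalIntegrable_rpow' (hadd i hi j hj)).const_mul (a i * a j)
  calc ∫ t in (0 : ℝ)..1, muntzPoly s l a t ^ 2
      = ∫ t in (0 : ℝ)..1, ∑ i ∈ s, ∑ j ∈ s, a i * a j * t ^ (l i + l j) := by
        refine intervalIntegral.integral_congr_ae (ae_of_all _ fun t ht => ?_)
        have ht0 : 0 < t := (Set.uIoc_of_le (zero_le_one' ℝ) ▸ ht : t ∈ Set.Ioc (0 : ℝ) 1).1
        simp only [muntzPoly, sq, Finset.sum_mul_sum, Real.rpow_add ht0, mul_mul_mul_comm]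
    _ = ∑ i ∈ s, ∑ j ∈ s, ∫ t in (0 : ℝ)..1, a i * a j * t ^ (l i + l j) := by
        rw [intervalIntegral.integral_finsetSum fun i hi => by
          simpa only [Finset.sum_fn] using IntervalIntegrable.sum s (hint i hi)]
        exact Finset.sum_congr rfl fun i hi => intervalIntegral.integral_finsetSum (hint i hi)
    _ = _ := by
        refine Finset.sum_congr rfl fun i hi => Finset.sum_congr rfl fun j hj => ?_
        have hij := hadd i hi j hj
        rw [intervalIntegral.integral_const_mul, integral_rpow (Or.inl hij), Real.one_rpow,
          Real.zero_rpow (by linarith), sub_zero, mul_one_div]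
        ring_nf

/-- The quadratic form is the square of the `L₂` norm of the primitive vanishing at `0`, which is
bounded by the `L₁` norm. -/
theorem cauchyForm_le_sq_integral_abs_muntzPoly (hl : ∀ i ∈ s, 0 ≤ l i) (a : ι → ℝ) :
    cauchyForm s (fun i => l i + 3 / 2) (fun i => a i / (l i + 1))
      ≤ (∫ t in (0 : ℝ)..1, |muntzPoly s l a t|) ^ 2 := by
  set F := muntzPoly s (fun i => l i + 1) (fun i => a i / (l i + 1))
  have hFcont : Continuous F := continuous_muntzPoly (fun i hi => by linarith [hl i hi]) _
  have hF : ∀ x ∈ Set.Icc (0 : ℝ) 1, |F x| ≤ ∫ t in (0 : ℝ)..1, |muntzPoly s l a t| := by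
    intro x hx
    have hprim : F x = ∫ t in (0 : ℝ)..x, muntzPoly s l a t :=
      (integral_muntzPoly (fun i hi => by linarith [hl i hi]) a x).symm
    rw [hprim]
    exact (intervalIntegral.abs_integral_le_integral_abs hx.1).trans <|
      intervalIntegral.integral_mono_interval le_rfl hx.1 hx.2 (ae_of_all _ fun _ => abs_nonneg _)
        ((continuous_muntzPoly hl a).abs.intervalIntegrable _ _)
  calc cauchyForm s (fun i => l i + 3 / 2) (fun i => a i / (l i + 1))
      = ∫ x in (0 : ℝ)..1, F x ^ 2 := by
        rw [integral_muntzPoly_sq fun i hi => by linarith [hl i hi]]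
        ring_nf
    _ ≤ ∫ _ in (0 : ℝ)..1, (∫ t in (0 : ℝ)..1, |muntzPoly s l a t|) ^ 2 :=
        intervalIntegral.integral_mono_on zero_le_one ((hFcont.pow 2).intervalIntegrable _ _)
          (by simp) fun x hx => sq_le_sq.2 ((hF x hx).trans (le_abs_self _))
    _ = _ := by simp

end MuntzPoly

/-- Lebesgue measure on the unit interval. -/
noncomputable abbrev unitVolume : Measure ℝ := volume.restrict (Set.Icc (0 : ℝ) 1)

instance : IsProbabilityMeasure unitVolume := ⟨by simp⟩

theorem memLp_rpow_unitVolume (p : ℝ≥0∞) {l : ℝ} (hl : 0 ≤ l) :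
    MemLp (fun t : ℝ => t ^ l) p unitVolume := by
  refine MemLp.of_bound (Real.continuous_rpow_const hl).aestronglyMeasurable 1
    (ae_restrict_of_forall_mem measurableSet_Icc fun t ht => ?_)
  rw [Real.norm_of_nonneg (Real.rpow_nonneg ht.1 _)]
  exact Real.rpow_le_one ht.1 ht.2 hl

theorem memLp_muntzPoly {ι : Type*} {s : Finset ι} {l : ι → ℝ} (p : ℝ≥0∞) (hl : ∀ i ∈ s, 0 ≤ l i)
    (a : ι → ℝ) : MemLp (muntzPoly s l a) p unitVolume :=
  memLp_finsetSum s fun i hi => (memLp_rpow_unitVolume p (hl i hi)).const_mul (a i)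

theorem integral_abs_le_toReal_eLpNorm {p : ℝ≥0∞} (hp : 1 ≤ p) {f : ℝ → ℝ}
    (hf : MemLp f p unitVolume) :
    ∫ t in (0 : ℝ)..1, |f t| ≤ (eLpNorm f p unitVolume).toReal := by
  have hL1 : ∫ t in (0 : ℝ)..1, |f t| = (eLpNorm f 1 unitVolume).toReal := by
    rw [intervalIntegral.integral_of_le zero_le_one, ← integral_Icc_eq_integral_Ioc,
      eLpNorm_one_eq_lintegral_enorm, ← integral_norm_eq_lintegral_enorm hf.1]
    simp only [Real.norm_eq_abs]
  rw [hL1]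
  exact ENNReal.toReal_mono hf.2.ne (eLpNorm_le_eLpNorm_of_exponent_le hp hf.1)

namespace IsMuntzSeq

variable {Λ : ℕ → ℝ}

theorem exists_abs_coeff_le_exp_mul_integral (hΛ : IsMuntzSeq Λ) :
    ∃ A B, ∀ (s : Finset ℕ) (a : ℕ → ℝ), ∀ k ∈ s,
      |a k| ≤ Real.exp (A + B * Λ k) * ∫ t in (0 : ℝ)..1, |muntzPoly s Λ a t| := by
  have hshift : IsMuntzSeq fun k => Λ k + 3 / 2 := by
    simpa only [one_mul] using hΛ.affine one_pos fun k => by linarith [hΛ.pos k]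
  obtain ⟨K, hK⟩ := hshift.exists_sq_coeff_le_exp_mul_cauchyForm
  refine ⟨3 * K / 4 + 1, K / 2 + 1, fun s a k hk => ?_⟩
  have hΛk := hΛ.pos k
  set I := ∫ t in (0 : ℝ)..1, |muntzPoly s Λ a t|
  have hI : 0 ≤ I := intervalIntegral.integral_nonneg zero_le_one fun _ _ => abs_nonneg _
  refine abs_le_of_sq_le_sq ?_ (by positivity)
  calc a k ^ 2 = (Λ k + 1) ^ 2 * (a k / (Λ k + 1)) ^ 2 := by field_simp
    _ ≤ Real.exp (Λ k) ^ 2 * (Real.exp (K * (Λ k + 3 / 2)) * I ^ 2) := by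
        gcongr
        · exact Real.add_one_le_exp _
        · exact (hK s _ k hk).trans <| mul_le_mul_of_nonneg_left
            (cauchyForm_le_sq_integral_abs_muntzPoly (fun i _ => (hΛ.pos i).le) a)
            (Real.exp_pos _).le
    _ = Real.exp (2 * Λ k + K * (Λ k + 3 / 2)) * I ^ 2 := by
        rw [← mul_assoc, sq (Real.exp _), ← Real.exp_add, ← Real.exp_add, ← two_mul]
    _ ≤ Real.exp (2 * (3 * K / 4 + 1 + (K / 2 + 1) * Λ k)) * I ^ 2 := by
        gcongr
        linarith
    _ = (Real.exp (3 * K / 4 + 1 + (K / 2 + 1) * Λ k) * I) ^ 2 := by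
        rw [mul_pow, sq (Real.exp _), ← Real.exp_add, ← two_mul]

theorem exists_abs_coeff_le_exp_mul_eLpNorm (hΛ : IsMuntzSeq Λ) {p : ℝ≥0∞} (hp : 1 ≤ p) :
    ∃ A B, ∀ (s : Finset ℕ) (a : ℕ → ℝ), ∀ k ∈ s,
      |a k| ≤ Real.exp (A + B * Λ k) * (eLpNorm (muntzPoly s Λ a) p unitVolume).toReal := by
  obtain ⟨A, B, hAB⟩ := hΛ.exists_abs_coeff_le_exp_mul_integral
  refine ⟨A, B, fun s a k hk => (hAB s a k hk).trans ?_⟩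
  gcongr
  exact integral_abs_le_toReal_eLpNorm hp (memLp_muntzPoly p (fun i _ => (hΛ.pos i).le) a)

theorem abs_muntzPoly_le_of_abs_coeff_le (hΛ : IsMuntzSeq Λ) {s : Finset ℕ} {a : ℕ → ℝ}
    {A B N t : ℝ} (ha : ∀ k ∈ s, |a k| ≤ Real.exp (A + B * Λ k) * N) (hN : 0 ≤ N) (ht : 0 ≤ t)
    (htB : t ≤ Real.exp (-(B + 1))) :
    |muntzPoly s Λ a t| ≤ Real.exp A * (∑' k, 1 / Λ k) * N := by
  have hterm : ∀ k ∈ s, |a k * t ^ Λ k| ≤ Real.exp A * N * (1 / Λ k) := fun k hk => by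
    have hΛk := hΛ.pos k
    calc |a k * t ^ Λ k|
        ≤ Real.exp (A + B * Λ k) * N * Real.exp (-(B + 1)) ^ Λ k := by
          rw [abs_mul, abs_of_nonneg (Real.rpow_nonneg ht _)]
          gcongr
          exact ha k hk
      _ = Real.exp A * N * Real.exp (-Λ k) := by
          rw [← Real.exp_mul, mul_right_comm, ← Real.exp_add, mul_right_comm, ← Real.exp_add]
          ring_nf
      _ ≤ Real.exp A * N * (1 / Λ k) := by
          rw [Real.exp_neg, one_div]
          gcongr
          linarith [Real.add_one_le_exp (Λ k)]
  calc |muntzPoly s Λ a t| ≤ ∑ k ∈ s, |a k * t ^ Λ k| := Finset.abs_sum_le_sum_abs _ _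
    _ ≤ ∑ k ∈ s, Real.exp A * N * (1 / Λ k) := Finset.sum_le_sum hterm
    _ ≤ Real.exp A * N * ∑' k, 1 / Λ k := by
        rw [← Finset.mul_sum]
        gcongr
        exact hΛ.summable.sum_le_tsum _ fun k _ => (one_div_pos.2 (hΛ.pos k)).le
    _ = _ := by ring

end IsMuntzSeq

section ChangeOfVariables

variable {E : Type*} [NormedAddCommGroup E] [NormedSpace ℝ E]

theorem exists_lintegral_le_lintegral_rpow_smul_comp_rpow {q α r : ℝ} (hq : 0 < q) (hα : 0 < α)
    (hr : 0 < r) (β : ℝ) :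
    ∃ C : ℝ≥0, ∀ F : ℝ → E, ∫⁻ t in Set.Icc r 1, ‖F t‖ₑ ^ q ≤
      C * ∫⁻ t in Set.Icc 0 1, ‖t ^ β • F (t ^ α)‖ₑ ^ q := by
  set r' := r ^ (1 / α)
  have hr' : 0 < r' := Real.rpow_pos_of_pos hr _
  have hpos : ∀ x ∈ Set.Icc r' 1, 0 < x := fun x hx => hr'.trans_le hx.1
  have hcont : ContinuousOn (fun x : ℝ => α * x ^ (α - 1) * (x ^ (-β)) ^ q) (Set.Icc r' 1) :=
    fun x hx => (((Real.continuousAt_rpow_const x _ (Or.inl (hpos x hx).ne')).const_mul α).mul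
      ((Real.continuousAt_rpow_const x _ (Or.inl (hpos x hx).ne')).rpow_const
        (Or.inr hq.le))).continuousWithinAt
  obtain ⟨M, hM⟩ := isCompact_Icc.exists_bound_of_continuousOn hcont
  have hinj : Set.InjOn (fun x : ℝ => x ^ α) (Set.Icc r' 1) := fun x hx y hy hxy =>
    (Real.rpow_left_inj (hpos x hx).le (hpos y hy).le hα.ne').1 hxy
  have hsub : Set.Icc r 1 ⊆ (fun x : ℝ => x ^ α) '' Set.Icc r' 1 := fun t ht =>
    have ht0 : 0 < t := hr.trans_le ht.1
    ⟨t ^ (1 / α), ⟨Real.rpow_le_rpow hr.le ht.1 (by positivity),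
      Real.rpow_le_one ht0.le ht.2 (by positivity)⟩, by
      simp only [← Real.rpow_mul ht0.le, one_div_mul_cancel hα.ne', Real.rpow_one]⟩
  refine ⟨M.toNNReal, fun F => ?_⟩
  set G := fun t : ℝ => t ^ β • F (t ^ α)
  have hjac : ∀ x ∈ Set.Icc r' 1,
      ENNReal.ofReal |α * x ^ (α - 1)| * ‖F (x ^ α)‖ₑ ^ q ≤ M.toNNReal * ‖G x‖ₑ ^ q := by
    intro x hx
    have hFG : F (x ^ α) = x ^ (-β) • G x := by
      rw [smul_smul, ← Real.rpow_add (hpos x hx), neg_add_cancel, Real.rpow_zero, one_smul]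
    rw [hFG, enorm_smul, ENNReal.mul_rpow_of_nonneg _ _ hq.le, ← Real.enorm_eq_ofReal_abs,
      ← Real.enorm_rpow_of_nonneg (Real.rpow_nonneg (hpos x hx).le _) hq.le, ← mul_assoc,
      ← enorm_mul, ← ofReal_norm]
    gcongr
    exact ENNReal.ofReal_le_ofReal (hM x hx)
  calc ∫⁻ t in Set.Icc r 1, ‖F t‖ₑ ^ q
      ≤ ∫⁻ t in (fun x : ℝ => x ^ α) '' Set.Icc r' 1, ‖F t‖ₑ ^ q := lintegral_mono_set hsub
    _ = ∫⁻ x in Set.Icc r' 1, ENNReal.ofReal |α * x ^ (α - 1)| * ‖F (x ^ α)‖ₑ ^ q :=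
        lintegral_image_eq_lintegral_abs_deriv_mul measurableSet_Icc (fun x hx =>
          (Real.hasDerivAt_rpow_const (Or.inl (hpos x hx).ne')).hasDerivWithinAt) hinj _
    _ ≤ ∫⁻ x in Set.Icc r' 1, M.toNNReal * ‖G x‖ₑ ^ q :=
        setLIntegral_mono' measurableSet_Icc hjac
    _ ≤ M.toNNReal * ∫⁻ x in Set.Icc 0 1, ‖G x‖ₑ ^ q := by
        rw [lintegral_const_mul' _ _ ENNReal.coe_ne_top]
        gcongr

theorem exists_eLpNorm_restrict_le_eLpNorm_rpow_smul_comp_rpow {p : ℝ≥0∞} (hp : p ≠ ∞) {α r : ℝ}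
    (hα : 0 < α) (hr : 0 < r) (β : ℝ) :
    ∃ C : ℝ≥0, ∀ F : ℝ → E, eLpNorm F p (volume.restrict (Set.Icc r 1)) ≤
      C * eLpNorm (fun t => t ^ β • F (t ^ α)) p unitVolume := by
  rcases eq_or_ne p 0 with rfl | hp0
  · exact ⟨0, fun F => by simp⟩
  have hq : 0 < p.toReal := ENNReal.toReal_pos hp0 hp
  obtain ⟨C, hC⟩ := exists_lintegral_le_lintegral_rpow_smul_comp_rpow (E := E) hq hα hr β
  refine ⟨C ^ (1 / p.toReal), fun F => ?_⟩
  rw [eLpNorm_eq_lintegral_rpow_enorm_toReal hp0 hp, eLpNorm_eq_lintegral_rpow_enorm_toReal hp0 hp,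
    ENNReal.coe_rpow_of_nonneg _ (by positivity), ← ENNReal.mul_rpow_of_nonneg _ _ (by positivity)]
  gcongr
  exact hC F

end ChangeOfVariables

theorem muntzPoly_affine {ι : Type*} (s : Finset ι) (l a : ι → ℝ) (α β : ℝ) {t : ℝ} (ht : 0 < t) :
    muntzPoly s (fun i => α * l i + β) a t = t ^ β * muntzPoly s l a (t ^ α) := by
  simp only [muntzPoly, Finset.mul_sum, Real.rpow_add ht, Real.rpow_mul ht.le]
  exact Finset.sum_congr rfl fun i _ => by ring

theorem eLpNorm_unitVolume_le_add {E : Type*} [NormedAddCommGroup E] {p : ℝ≥0∞} (hp : 1 ≤ p)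
    {f : ℝ → E} (hf : AEStronglyMeasurable f unitVolume) {r D : ℝ} (hD : 0 ≤ D)
    (hfD : ∀ t ∈ Set.Icc 0 r, ‖f t‖ ≤ D) :
    eLpNorm f p unitVolume ≤
      ENNReal.ofReal D + eLpNorm f p (volume.restrict (Set.Icc r 1)) := by
  have hsplit : f = (Set.Iio r).indicator f + (Set.Ici r).indicator f := by
    rw [← Set.compl_Iio, Set.indicator_self_add_compl]
  have hlow : eLpNorm ((Set.Iio r).indicator f) p unitVolume ≤ ENNReal.ofReal D := by
    refine (eLpNorm_le_of_ae_bound (C := D) <|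
      ae_restrict_of_forall_mem measurableSet_Icc fun t ht => ?_).trans_eq (by simp)
    rw [norm_indicator_eq_indicator_norm]
    exact Set.indicator_apply_le' (fun htr => hfD t ⟨ht.1, le_of_lt htr⟩) fun _ => hD
  have hhigh : eLpNorm ((Set.Ici r).indicator f) p unitVolume ≤
      eLpNorm f p (volume.restrict (Set.Icc r 1)) := by
    rw [eLpNorm_indicator_eq_eLpNorm_restrict measurableSet_Ici,
      Measure.restrict_restrict measurableSet_Ici]
    have hsub : Set.Ici r ∩ Set.Icc 0 1 ⊆ Set.Icc r 1 := fun t ht => ⟨ht.1, ht.2.2⟩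
    exact eLpNorm_mono_measure _ (Measure.restrict_mono hsub le_rfl)
  calc eLpNorm f p unitVolume
      = eLpNorm ((Set.Iio r).indicator f + (Set.Ici r).indicator f) p unitVolume := by
        rw [← hsplit]
    _ ≤ _ := eLpNorm_add_le (hf.indicator measurableSet_Iio) (hf.indicator measurableSet_Ici) hp
    _ ≤ _ := add_le_add hlow hhigh

theorem IsMuntzSeq.exists_eLpNorm_muntzPoly_le_affine {Λ : ℕ → ℝ} (hΛ : IsMuntzSeq Λ) {α β : ℝ}
    (hα : 0 < α) (hpos : ∀ k, 0 < α * Λ k + β) {p : ℝ≥0∞} (hp : 1 ≤ p) (hp' : p ≠ ∞) :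
    ∃ C : ℝ≥0, ∀ (s : Finset ℕ) (a : ℕ → ℝ), eLpNorm (muntzPoly s Λ a) p unitVolume ≤
      C * eLpNorm (muntzPoly s (fun k => α * Λ k + β) a) p unitVolume := by
  have hΛ' := hΛ.affine hα hpos
  obtain ⟨A, B, hAB⟩ := hΛ'.exists_abs_coeff_le_exp_mul_eLpNorm hp
  obtain ⟨C, hC⟩ := exists_eLpNorm_restrict_le_eLpNorm_rpow_smul_comp_rpow (E := ℝ) hp' hα
    (Real.exp_pos (-(B * α + 1))) β
  set D := Real.exp (A + B * β) * ∑' k, 1 / Λ k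
  have hD : 0 ≤ D :=
    mul_nonneg (Real.exp_pos _).le (tsum_nonneg fun k => (one_div_pos.2 (hΛ.pos k)).le)
  refine ⟨D.toNNReal + C, fun s a => ?_⟩
  set g := muntzPoly s (fun k => α * Λ k + β) a with hg
  set N := (eLpNorm g p unitVolume).toReal
  have hN : 0 ≤ N := ENNReal.toReal_nonneg
  have hgN : ENNReal.ofReal N = eLpNorm g p unitVolume :=
    ENNReal.ofReal_toReal (memLp_muntzPoly p (fun i _ => (hΛ'.pos i).le) a).2.ne
  have hcoeff : ∀ k ∈ s, |a k| ≤ Real.exp (A + B * β + B * α * Λ k) * N := fun k hk =>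
    (hAB s a k hk).trans_eq (congrArg (fun z => Real.exp z * N) (by ring))
  have hgcomp : eLpNorm (fun t => t ^ β • muntzPoly s Λ a (t ^ α)) p unitVolume
      = eLpNorm g p unitVolume := by
    refine eLpNorm_congr_ae ?_
    filter_upwards [ae_restrict_of_ae (Measure.ae_ne volume (0 : ℝ)),
      ae_restrict_mem measurableSet_Icc] with t ht0 ht
    rw [hg, muntzPoly_affine s Λ a α β (lt_of_le_of_ne ht.1 ht0.symm), smul_eq_mul]
  calc eLpNorm (muntzPoly s Λ a) p unitVolume
      ≤ ENNReal.ofReal (D * N) + C * eLpNorm g p unitVolume := by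
        rw [← hgcomp]
        refine (eLpNorm_unitVolume_le_add hp
          (continuous_muntzPoly (fun i _ => (hΛ.pos i).le) a).aestronglyMeasurable
          (by positivity) fun t ht => ?_).trans (add_le_add le_rfl (hC _))
        exact hΛ.abs_muntzPoly_le_of_abs_coeff_le hcoeff hN ht.1 ht.2
    _ = (D.toNNReal + C : ℝ≥0) * eLpNorm g p unitVolume := by
        rw [ENNReal.ofReal_mul hD, hgN, ENNReal.coe_add, add_mul]
        rfl

section ClosedSpan

variable {𝕜 ι E F : Type*} [NontriviallyNormedField 𝕜]
  [NormedAddCommGroup E] [NormedSpace 𝕜 E] [NormedAddCommGroup F] [NormedSpace 𝕜 F]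

theorem linearCombination_mem_closedSpan (e : ι → E) (a : ι →₀ 𝕜) :
    Finsupp.linearCombination 𝕜 e a ∈ (Submodule.span 𝕜 (Set.range e)).topologicalClosure := by
  refine Submodule.le_topologicalClosure _ ?_
  rw [← Finsupp.range_linearCombination]
  exact LinearMap.mem_range_self _ a

theorem denseRange_linearCombination_codRestrict (e : ι → E) :
    DenseRange ((Finsupp.linearCombination 𝕜 e).codRestrict
      (Submodule.span 𝕜 (Set.range e)).topologicalClosure
      (linearCombination_mem_closedSpan e)) := by
  intro x
  rw [closure_subtype, ← Set.range_comp]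
  exact closure_mono (fun y hy => (Finsupp.range_linearCombination 𝕜).ge hy) x.2

theorem nonempty_closedSpan_equiv [CompleteSpace E] [CompleteSpace F] {e₁ : ι → E} {e₂ : ι → F}
    (h₁ : ∃ C : ℝ, ∀ a : ι →₀ 𝕜,
      ‖Finsupp.linearCombination 𝕜 e₁ a‖ ≤ C * ‖Finsupp.linearCombination 𝕜 e₂ a‖)
    (h₂ : ∃ C : ℝ, ∀ a : ι →₀ 𝕜,
      ‖Finsupp.linearCombination 𝕜 e₂ a‖ ≤ C * ‖Finsupp.linearCombination 𝕜 e₁ a‖) :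
    Nonempty ((Submodule.span 𝕜 (Set.range e₁)).topologicalClosure ≃L[𝕜]
      (Submodule.span 𝕜 (Set.range e₂)).topologicalClosure) :=
  have := (Submodule.span 𝕜 (Set.range e₁)).isClosed_topologicalClosure.completeSpace_coe
  have := (Submodule.span 𝕜 (Set.range e₂)).isClosed_topologicalClosure.completeSpace_coe
  ⟨LinearEquiv.extend (LinearEquiv.refl 𝕜 (ι →₀ 𝕜)) _ _
    (denseRange_linearCombination_codRestrict e₁) h₂
    (denseRange_linearCombination_codRestrict e₂) h₁⟩

end ClosedSpan

section Retract

variable {𝕜 X Y W : Type*} [NontriviallyNormedField 𝕜]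
  [NormedAddCommGroup X] [NormedSpace 𝕜 X] [NormedAddCommGroup Y] [NormedSpace 𝕜 Y]
  [NormedAddCommGroup W] [NormedSpace 𝕜 W]

/- Pełczyński's decomposition: `X ≃ ker B × Y`, and the second factor absorbs `W`. -/
theorem nonempty_prod_equiv_of_leftInverse (A : Y →L[𝕜] X) (B : X →L[𝕜] Y)
    (hBA : Function.LeftInverse B A) (Φ : (Y × W) ≃L[𝕜] Y) : Nonempty ((X × W) ≃L[𝕜] X) := by
  let P : X →L[𝕜] X := .id 𝕜 X - A ∘L B
  let Ψ : X →L[𝕜] Y × W := Φ.symm.toContinuousLinearMap ∘L B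
  refine ⟨.equivOfInverse
    (P ∘L .fst 𝕜 X W + A ∘L Φ.toContinuousLinearMap ∘L B.prodMap (.id 𝕜 W))
    ((P + A ∘L .fst 𝕜 Y W ∘L Ψ).prod (.snd 𝕜 Y W ∘L Ψ)) ?_ ?_⟩
  · rintro ⟨x, t⟩
    simp [P, Ψ, hBA _]
  · intro y
    simp [P, Ψ, hBA _]

end Retract

section Sequences

variable {𝕜 : Type*} [RCLike 𝕜] {p : ℝ≥0∞}

theorem toReal_pos_of_one_le [Fact (1 ≤ p)] (hp : p ≠ ∞) : 0 < p.toReal :=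
  ENNReal.toReal_pos (zero_lt_one.trans_le Fact.out).ne' hp

variable {E F : Type*} [NormedAddCommGroup E] [NormedSpace 𝕜 E]
  [NormedAddCommGroup F] [NormedSpace 𝕜 F]

theorem lp_linearCombination_single {ι : Type*} [DecidableEq ι] (a : ι →₀ 𝕜) :
    Finsupp.linearCombination 𝕜 (fun i => lp.single (E := fun _ => 𝕜) p i (1 : 𝕜)) a =
      ∑ i ∈ a.support, lp.single (E := fun _ => 𝕜) p i (a i) := by
  rw [Finsupp.linearCombination_apply, Finsupp.sum]
  refine Finset.sum_congr rfl fun i _ => ?_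
  rw [← lp.single_smul, smul_eq_mul, mul_one]

variable [Fact (1 ≤ p)]

theorem exists_lp_of_sum_rpow_norm_le {ι : Type*} (hp : p ≠ ∞) (φ : ι → E →L[𝕜] F)
    (h : ∀ x s, ∑ i ∈ s, ‖φ i x‖ ^ p.toReal ≤ ‖x‖ ^ p.toReal) :
    ∃ B : E →L[𝕜] lp (fun _ : ι => F) p, (∀ x i, B x i = φ i x) ∧ ‖B‖ ≤ 1 := by
  let B : E →ₗ[𝕜] lp (fun _ : ι => F) p :=
    { toFun := fun x => ⟨fun i => φ i x, memℓp_gen' (h x)⟩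
      map_add' := fun x y => by ext i; exact map_add (φ i) x y
      map_smul' := fun c x => by ext i; exact map_smul (φ i) c x }
  refine ⟨B.mkContinuous 1 fun x => ?_, fun _ _ => rfl, B.mkContinuous_norm_le zero_le_one _⟩
  rw [one_mul]
  exact lp.norm_le_of_forall_sum_le (toReal_pos_of_one_le hp) (norm_nonneg _) (h x)

theorem denseRange_lp_linearCombination_single {ι : Type*} [DecidableEq ι] (hp : p ≠ ∞) :
    DenseRange (Finsupp.linearCombination 𝕜
      fun i : ι => lp.single (E := fun _ => 𝕜) p i (1 : 𝕜)) := by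
  intro c
  refine mem_closure_of_tendsto (lp.hasSum_single hp c) (.of_forall fun s => ?_)
  refine ⟨∑ i ∈ s, Finsupp.single i (c i), ?_⟩
  rw [map_sum]
  refine Finset.sum_congr rfl fun i _ => ?_
  rw [Finsupp.linearCombination_single, ← lp.single_smul, smul_eq_mul, mul_one]

theorem exists_lp_single_eq_of_norm_sum_rpow_le [CompleteSpace E] {ι : Type*} [DecidableEq ι]
    (hp : p ≠ ∞) (g : ι → E)
    (h : ∀ (c : ι → 𝕜) s, ‖∑ i ∈ s, c i • g i‖ ^ p.toReal ≤ ∑ i ∈ s, ‖c i‖ ^ p.toReal) :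
    ∃ A : lp (fun _ : ι => 𝕜) p →L[𝕜] E, ∀ i, A (lp.single p i 1) = g i := by
  have hq := toReal_pos_of_one_le hp
  have hdense := denseRange_lp_linearCombination_single (𝕜 := 𝕜) (ι := ι) hp
  set e := Finsupp.linearCombination 𝕜 fun i : ι => lp.single (E := fun _ => 𝕜) p i (1 : 𝕜) with he
  have hnorm (a : ι →₀ 𝕜) : ‖Finsupp.linearCombination 𝕜 g a‖ ≤ 1 * ‖e a‖ := by
    rw [one_mul, ← Real.rpow_le_rpow_iff (norm_nonneg _) (norm_nonneg _) hq, he,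
      lp_linearCombination_single]
    exact (h a a.support).trans_eq (lp.norm_sum_single hq (fun i => a i) a.support).symm
  refine ⟨(Finsupp.linearCombination 𝕜 g).extendOfNorm e, fun i => ?_⟩
  have hext := LinearMap.extendOfNorm_eq hdense ⟨1, hnorm⟩ (Finsupp.single i 1)
  rw [he, Finsupp.linearCombination_single, Finsupp.linearCombination_single] at hext
  simpa only [one_smul] using hext

/- The tail of a sequence together with its zeroth term determines the sequence. -/
theorem nonempty_lp_prod_equiv [CompleteSpace F] (hp : p ≠ ∞) :
    Nonempty ((lp (fun _ : ℕ => F) p × F) ≃L[𝕜] lp (fun _ : ℕ => F) p) := by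
  have hq := toReal_pos_of_one_le hp
  obtain ⟨tail, htail, -⟩ := exists_lp_of_sum_rpow_norm_le hp
    (fun n => lp.evalCLM 𝕜 (fun _ : ℕ => F) p (n + 1)) fun c s => by
      have := lp.sum_rpow_le_norm_rpow hq c (s.map ⟨_, Nat.succ_injective⟩)
      rwa [Finset.sum_map] at this
  let T := tail.prod (lp.evalCLM 𝕜 (fun _ : ℕ => F) p 0)
  have hinj : T.ker = ⊥ := by
    refine LinearMap.ker_eq_bot'.2 fun c hc => ?_
    ext n
    cases n with
    | zero => exact congrArg Prod.snd hc
    | succ n => exact (htail c n).symm.trans (congrArg (fun y => y.1 n) hc)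
  have hsurj : T.range = ⊤ := by
    refine LinearMap.range_eq_top.2 fun ⟨c, t⟩ => ?_
    have hsum : Summable fun n => ‖(Nat.casesOn n t c : F)‖ ^ p.toReal :=
      (summable_nat_add_iff 1).1 (lp.hasSum_norm hq c).summable
    refine ⟨⟨_, memℓp_gen hsum⟩, Prod.ext (lp.ext (funext fun n => ?_)) rfl⟩
    exact htail _ n
  exact ⟨(ContinuousLinearEquiv.ofBijective T hinj hsurj).symm⟩

theorem exists_leftInverse_of_norm_one_sub_comp_lt {X Y : Type*}
    [NormedAddCommGroup X] [NormedSpace 𝕜 X] [NormedAddCommGroup Y] [NormedSpace 𝕜 Y]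
    [CompleteSpace Y] (A : Y →L[𝕜] X) (B : X →L[𝕜] Y) (h : ‖1 - B ∘L A‖ < 1) :
    ∃ B' : X →L[𝕜] Y, Function.LeftInverse B' A := by
  obtain ⟨u, hu⟩ : IsUnit (B ∘L A) := by simpa using (Units.oneSub _ h).isUnit
  refine ⟨(↑u⁻¹ : Y →L[𝕜] Y) ∘L B, fun c => ?_⟩
  simpa [hu] using congrArg (fun T : Y →L[𝕜] Y => T c) u.inv_mul

theorem exists_lp_perturbation_of_summable {ι : Type*} [DecidableEq ι] [CompleteSpace E] (d : ι → E)
    (hd : Summable fun i => ‖d i‖) : ∃ D : lp (fun _ : ι => 𝕜) p →L[𝕜] E,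
      (∀ i, D (lp.single p i 1) = d i) ∧ ‖D‖ ≤ ∑' i, ‖d i‖ := by
  let T (i : ι) : lp (fun _ : ι => 𝕜) p →L[𝕜] E :=
    (lp.evalCLM 𝕜 (fun _ : ι => 𝕜) p i).smulRight (d i)
  have hT (i : ι) : ‖T i‖ ≤ ‖d i‖ := by
    refine (T i).opNorm_le_bound (norm_nonneg _) fun c => ?_
    calc ‖T i c‖ = ‖c i‖ * ‖d i‖ := norm_smul _ _
      _ ≤ ‖c‖ * ‖d i‖ := by
        gcongr
        exact lp.norm_apply_le_norm (zero_lt_one.trans_le Fact.out).ne' c i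
      _ = ‖d i‖ * ‖c‖ := mul_comm _ _
  have hsum : Summable T := .of_norm_bounded hd hT
  refine ⟨∑' i, T i, fun i => ?_, tsum_of_norm_bounded hd.hasSum hT⟩
  have hT_single (j : ι) : T j (lp.single p i 1) =
      Pi.single (M := fun _ => 𝕜) i 1 j • d j := rfl
  have hsum_apply := (ContinuousLinearMap.apply 𝕜 E (lp.single p i (1 : 𝕜))).map_tsum hsum
  simp only [ContinuousLinearMap.apply_apply, hT_single] at hsum_apply
  rw [hsum_apply, tsum_eq_single i fun j hj => by rw [Pi.single_eq_of_ne hj, zero_smul],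
    Pi.single_eq_same, one_smul]

theorem lp_range_subset_of_single_mem {ι : Type*} [DecidableEq ι] (hp : p ≠ ∞)
    {X : Submodule 𝕜 E} (hX : IsClosed (X : Set E)) (A : lp (fun _ : ι => 𝕜) p →L[𝕜] E)
    (hA : ∀ i, A (lp.single p i 1) ∈ X) (c : lp (fun _ : ι => 𝕜) p) : A c ∈ X := by
  refine hX.mem_of_tendsto ((A.continuous.tendsto c).comp (lp.hasSum_single hp c))
    (.of_forall fun s => ?_)
  rw [Function.comp_apply, map_sum]
  refine X.sum_mem fun i _ => ?_
  rw [← mul_one (c i), ← smul_eq_mul, lp.single_smul, map_smul]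
  exact X.smul_mem _ (hA i)

/- The operator `A + D` with `D eₘ = f m - A eₘ` sends the unit vectors into `X`, and
`B ∘ (A + D)` is within `‖B‖ * ‖D‖ < 1` of the identity, so `X` contains a complemented `ℓ_p`. -/
theorem nonempty_prod_equiv_of_perturbation [CompleteSpace E]
    (hp : p ≠ ∞) {X : Submodule 𝕜 E} (hX : IsClosed (X : Set E))
    (A : lp (fun _ : ℕ => 𝕜) p →L[𝕜] E) (B : E →L[𝕜] lp (fun _ : ℕ => 𝕜) p)
    (hBA : Function.LeftInverse B A) {f : ℕ → E} (hfX : ∀ m, f m ∈ X)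
    (hsum : Summable fun m => ‖f m - A (lp.single p m 1)‖)
    (hlt : ‖B‖ * ∑' m, ‖f m - A (lp.single p m 1)‖ < 1) : Nonempty ((X × 𝕜) ≃L[𝕜] X) := by
  obtain ⟨D, hD, hDnorm⟩ := exists_lp_perturbation_of_summable (𝕜 := 𝕜) (p := p) _ hsum
  have hmem : ∀ c, (A + D) c ∈ X := lp_range_subset_of_single_mem hp hX _ fun m => by
    simpa [hD] using hfX m
  let A' : lp (fun _ : ℕ => 𝕜) p →L[𝕜] X := (A + D).codRestrict X hmem
  have hdiff : 1 - (B ∘L X.subtypeL) ∘L A' = -(B ∘L D) := by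
    ext1 c
    simp [A', hBA c]
  have hsmall : ‖1 - (B ∘L X.subtypeL) ∘L A'‖ < 1 := by
    rw [hdiff, norm_neg]
    calc ‖B ∘L D‖ ≤ ‖B‖ * ‖D‖ := B.opNorm_comp_le D
      _ ≤ ‖B‖ * ∑' m, ‖f m - A (lp.single p m 1)‖ := by gcongr
      _ < 1 := hlt
  obtain ⟨B', hB'⟩ := exists_leftInverse_of_norm_one_sub_comp_lt A' _ hsmall
  obtain ⟨Φ⟩ := nonempty_lp_prod_equiv (𝕜 := 𝕜) (F := 𝕜) hp
  exact nonempty_prod_equiv_of_leftInverse A' B' hB' Φ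

end Sequences

theorem nonempty_equiv_sup_span_singleton {𝕜 E : Type*} [NontriviallyNormedField 𝕜]
    [CompleteSpace 𝕜] [NormedAddCommGroup E] [NormedSpace 𝕜 E] [CompleteSpace E]
    {X : Submodule 𝕜 E} (hX : IsClosed (X : Set E)) (hXX : Nonempty ((X × 𝕜) ≃L[𝕜] X)) (v : E) :
    Nonempty (X ≃L[𝕜] (X ⊔ 𝕜 ∙ v : Submodule 𝕜 E)) := by
  by_cases hv : v ∈ X
  · rw [sup_eq_left.2 ((Submodule.span_singleton_le_iff_mem v X).2 hv)]
    exact ⟨.refl 𝕜 X⟩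
  obtain ⟨Φ⟩ := hXX
  have := hX.completeSpace_coe
  let T : X × 𝕜 →L[𝕜] E := X.subtypeL.coprod (.toSpanSingleton 𝕜 v)
  have hrange : T.range = X ⊔ 𝕜 ∙ v := by
    simp [T, LinearMap.range_coprod, LinearMap.range_toSpanSingleton]
  have hinj : Function.Injective T := by
    have hv0 : v ≠ 0 := fun h => hv (h ▸ X.zero_mem)
    refine LinearMap.ker_eq_bot.1 ?_
    rw [ContinuousLinearMap.ker_coprod_of_disjoint_range]
    · simp [LinearMap.ker_toSpanSingleton 𝕜 hv0]
    · simp [LinearMap.range_toSpanSingleton, Submodule.disjoint_span_singleton' hv0, hv]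
  have hclosed : IsClosed (Set.range T) := by
    have := Submodule.isClosed_sup_finiteDimensional X (𝕜 ∙ v) hX
    rwa [← hrange] at this
  exact ⟨Φ.symm.trans (hrange ▸ T.equivRange hinj hclosed)⟩

section GlidingHump

variable {Ω F : Type*} [MeasurableSpace Ω] {μ : Measure Ω} [NormedAddCommGroup F] {p : ℝ≥0∞}

theorem norm_toLp_indicator_le {I : Set Ω} (hI : MeasurableSet I) (x : Lp F p μ) :
    ‖((Lp.memLp x).indicator hI).toLp‖ ≤ ‖x‖ := by
  rw [Lp.norm_toLp, Lp.norm_def]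
  exact ENNReal.toReal_mono (Lp.eLpNorm_ne_top x) (eLpNorm_indicator_le _)

variable [Fact (1 ≤ p)]

theorem ofReal_norm_rpow_eq_lintegral (hp : p ≠ ∞) (x : Lp F p μ) :
    ENNReal.ofReal (‖x‖ ^ p.toReal) = ∫⁻ t, ‖x t‖ₑ ^ p.toReal ∂μ := by
  have hq := toReal_pos_of_one_le hp
  rw [← ENNReal.ofReal_rpow_of_nonneg (norm_nonneg _) hq.le, Lp.norm_def,
    ENNReal.ofReal_toReal (Lp.eLpNorm_ne_top x),
    eLpNorm_eq_lintegral_rpow_enorm_toReal (zero_lt_one.trans_le Fact.out).ne' hp,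
    ← ENNReal.rpow_mul, one_div, inv_mul_cancel₀ hq.ne', ENNReal.rpow_one]

variable {𝕜 : Type*} [RCLike 𝕜] [NormedSpace 𝕜 F]

variable (𝕜) in
/-- The norm-one projection of `L_p(μ)` that multiplies a function by the indicator of `I`. -/
noncomputable def indicatorLp {I : Set Ω} (hI : MeasurableSet I) : Lp F p μ →L[𝕜] Lp F p μ :=
  LinearMap.mkContinuous
    { toFun := fun x => ((Lp.memLp x).indicator hI).toLp
      map_add' := fun x y => by
        rw [← MemLp.toLp_add, MemLp.toLp_eq_toLp_iff]
        filter_upwards [Lp.coeFn_add x y] with t ht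
        by_cases h : t ∈ I
        · simpa [h] using ht
        · simp [h]
      map_smul' := fun c x => by
        rw [RingHom.id_apply, ← MemLp.toLp_const_smul, MemLp.toLp_eq_toLp_iff]
        filter_upwards [Lp.coeFn_smul c x] with t ht
        by_cases h : t ∈ I
        · simpa [h] using ht
        · simp [h] }
    1 fun x => (norm_toLp_indicator_le hI x).trans_eq (one_mul _).symm

variable {I J : Set Ω}

theorem coeFn_indicatorLp (hI : MeasurableSet I) (x : Lp F p μ) :
    indicatorLp 𝕜 hI x =ᵐ[μ] I.indicator x :=
  ((Lp.memLp x).indicator hI).coeFn_toLp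

theorem norm_indicatorLp_le (hI : MeasurableSet I) (x : Lp F p μ) :
    ‖indicatorLp 𝕜 hI x‖ ≤ ‖x‖ :=
  norm_toLp_indicator_le hI x

theorem indicatorLp_indicatorLp_of_subset (hI : MeasurableSet I) (hJ : MeasurableSet J)
    (hIJ : I ⊆ J) (x : Lp F p μ) :
    indicatorLp 𝕜 hJ (indicatorLp 𝕜 hI x) = indicatorLp 𝕜 hI x := by
  refine Lp.ext ?_
  filter_upwards [coeFn_indicatorLp (𝕜 := 𝕜) hJ (indicatorLp 𝕜 hI x),
    coeFn_indicatorLp (𝕜 := 𝕜) hI x] with t h₁ h₂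
  by_cases ht : t ∈ J
  · rw [h₁, Set.indicator_of_mem ht]
  · rw [h₁, h₂, Set.indicator_of_notMem ht, Set.indicator_of_notMem fun h => ht (hIJ h)]

theorem indicatorLp_indicatorLp_of_disjoint (hI : MeasurableSet I) (hJ : MeasurableSet J)
    (hIJ : Disjoint I J) (x : Lp F p μ) : indicatorLp 𝕜 hJ (indicatorLp 𝕜 hI x) = 0 := by
  refine (Lp.eq_zero_iff_ae_eq_zero).2 ?_
  filter_upwards [coeFn_indicatorLp (𝕜 := 𝕜) hJ (indicatorLp 𝕜 hI x),
    coeFn_indicatorLp (𝕜 := 𝕜) hI x] with t h₁ h₂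
  rw [h₁, Pi.zero_apply, Set.indicator_apply_eq_zero, h₂]
  exact fun ht => Set.indicator_of_notMem (hIJ.notMem_of_mem_right ht) _

theorem ofReal_norm_indicatorLp_rpow (hp : p ≠ ∞) (hI : MeasurableSet I) (x : Lp F p μ) :
    ENNReal.ofReal (‖indicatorLp 𝕜 hI x‖ ^ p.toReal) = ∫⁻ t in I, ‖x t‖ₑ ^ p.toReal ∂μ := by
  rw [ofReal_norm_rpow_eq_lintegral hp, ← lintegral_indicator hI]
  refine lintegral_congr_ae ?_
  filter_upwards [coeFn_indicatorLp (𝕜 := 𝕜) hI x] with t ht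
  by_cases h : t ∈ I
  · rw [ht, Set.indicator_of_mem h, Set.indicator_of_mem h]
  · rw [ht, Set.indicator_of_notMem h, Set.indicator_of_notMem h, enorm_zero,
      ENNReal.zero_rpow_of_pos (toReal_pos_of_one_le hp)]

theorem norm_indicatorLp_rpow_add_norm_sub_rpow (hp : p ≠ ∞) (hI : MeasurableSet I) (x : Lp F p μ) :
    ‖indicatorLp 𝕜 hI x‖ ^ p.toReal + ‖x - indicatorLp 𝕜 hI x‖ ^ p.toReal = ‖x‖ ^ p.toReal := by
  have hcompl : x - indicatorLp 𝕜 hI x = indicatorLp 𝕜 hI.compl x := by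
    refine Lp.ext ?_
    filter_upwards [Lp.coeFn_sub x (indicatorLp 𝕜 hI x), coeFn_indicatorLp (𝕜 := 𝕜) hI x,
      coeFn_indicatorLp (𝕜 := 𝕜) hI.compl x] with t h₁ h₂ h₃
    rw [h₁, Pi.sub_apply, h₂, h₃, Set.indicator_compl, Pi.sub_apply]
  rw [hcompl, ← ENNReal.ofReal_eq_ofReal_iff (by positivity) (by positivity),
    ENNReal.ofReal_add (by positivity) (by positivity), ofReal_norm_indicatorLp_rpow hp,
    ofReal_norm_indicatorLp_rpow hp, lintegral_add_compl _ hI, ofReal_norm_rpow_eq_lintegral hp]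

variable {ι : Type*} {I : ι → Set Ω}

theorem sum_norm_indicatorLp_rpow (hp : p ≠ ∞) (hI : ∀ i, MeasurableSet (I i))
    (hdisj : Pairwise (Function.onFun Disjoint I)) (s : Finset ι) (x : Lp F p μ) :
    ∑ i ∈ s, ‖indicatorLp 𝕜 (hI i) x‖ ^ p.toReal =
      ‖indicatorLp 𝕜 (s.measurableSet_biUnion fun i _ => hI i) x‖ ^ p.toReal := by
  rw [← ENNReal.ofReal_eq_ofReal_iff (by positivity) (by positivity),
    ENNReal.ofReal_sum_of_nonneg fun i _ => by positivity, ofReal_norm_indicatorLp_rpow hp,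
    lintegral_biUnion_finset (fun i _ j _ hij => hdisj hij) fun i _ => hI i]
  exact Finset.sum_congr rfl fun i _ => ofReal_norm_indicatorLp_rpow hp (hI i) x

theorem sum_norm_indicatorLp_rpow_le (hp : p ≠ ∞) (hI : ∀ i, MeasurableSet (I i))
    (hdisj : Pairwise (Function.onFun Disjoint I)) (s : Finset ι) (x : Lp F p μ) :
    ∑ i ∈ s, ‖indicatorLp 𝕜 (hI i) x‖ ^ p.toReal ≤ ‖x‖ ^ p.toReal := by
  rw [sum_norm_indicatorLp_rpow hp hI hdisj]
  gcongr
  exact norm_indicatorLp_le _ x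

theorem norm_sum_indicatorLp_rpow (hp : p ≠ ∞) (hI : ∀ i, MeasurableSet (I i))
    (hdisj : Pairwise (Function.onFun Disjoint I)) (s : Finset ι) (x : ι → Lp F p μ) :
    ‖∑ i ∈ s, indicatorLp 𝕜 (hI i) (x i)‖ ^ p.toReal =
      ∑ i ∈ s, ‖indicatorLp 𝕜 (hI i) (x i)‖ ^ p.toReal := by
  set y := ∑ i ∈ s, indicatorLp 𝕜 (hI i) (x i) with hy
  have hyU : indicatorLp 𝕜 (s.measurableSet_biUnion fun i _ => hI i) y = y := by
    rw [hy, map_sum]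
    exact Finset.sum_congr rfl fun i hi =>
      indicatorLp_indicatorLp_of_subset _ _ (Set.subset_biUnion_of_mem (u := I) hi) _
  have hyI (i) (hi : i ∈ s) : indicatorLp 𝕜 (hI i) y = indicatorLp 𝕜 (hI i) (x i) := by
    rw [hy, map_sum, Finset.sum_eq_single_of_mem i hi fun j _ hj =>
      indicatorLp_indicatorLp_of_disjoint _ _ (hdisj hj) _,
      indicatorLp_indicatorLp_of_subset _ _ subset_rfl]
  rw [← hyU, ← sum_norm_indicatorLp_rpow hp hI hdisj]
  exact Finset.sum_congr rfl fun i hi => by rw [hyI i hi]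

theorem exists_lp_complemented_of_disjoint_support [CompleteSpace F] [DecidableEq ι] (hp : p ≠ ∞)
    (hI : ∀ i, MeasurableSet (I i)) (hdisj : Pairwise (Function.onFun Disjoint I))
    {g : ι → Lp F p μ} (hg : ∀ i, indicatorLp 𝕜 (hI i) (g i) = g i) (hnorm : ∀ i, ‖g i‖ = 1) :
    ∃ (A : lp (fun _ : ι => 𝕜) p →L[𝕜] Lp F p μ) (B : Lp F p μ →L[𝕜] lp (fun _ : ι => 𝕜) p),
      (∀ i, A (lp.single p i 1) = g i) ∧ Function.LeftInverse B A ∧ ‖B‖ ≤ 1 := by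
  have hψ (i) : ∃ ψ : StrongDual 𝕜 (Lp F p μ), ‖ψ‖ = 1 ∧ ψ (g i) = 1 := by
    obtain ⟨ψ, hψ, hψg⟩ := exists_dual_vector 𝕜 (g i) (by simp [hnorm])
    exact ⟨ψ, hψ, by simpa [hnorm] using hψg⟩
  choose ψ hψ hψg using hψ
  obtain ⟨A, hA⟩ := exists_lp_single_eq_of_norm_sum_rpow_le (𝕜 := 𝕜) hp g fun c s => by
    have h := norm_sum_indicatorLp_rpow (𝕜 := 𝕜) hp hI hdisj s fun i => c i • g i
    simp only [map_smul, hg, norm_smul, hnorm, mul_one] at h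
    exact h.le
  obtain ⟨B, hB, hBnorm⟩ := exists_lp_of_sum_rpow_norm_le hp
    (fun i => ψ i ∘L indicatorLp 𝕜 (hI i)) fun x s => by
      refine le_trans (Finset.sum_le_sum fun i _ => ?_)
        (sum_norm_indicatorLp_rpow_le (𝕜 := 𝕜) hp hI hdisj s x)
      gcongr
      simpa [hψ] using (ψ i).le_opNorm (indicatorLp 𝕜 (hI i) x)
  have hBA : B ∘L A = .id 𝕜 _ := by
    refine lp.ext_continuousLinearMap hp fun j => ?_
    ext i
    change B (A (lp.single p j 1)) i = (lp.single p j 1 : lp (fun _ : ι => 𝕜) p) i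
    rw [hA, hB, ContinuousLinearMap.comp_apply]
    by_cases hij : i = j
    · rw [hij, hg, hψg, lp.single_apply_self]
    · rw [← hg j, indicatorLp_indicatorLp_of_disjoint _ _ (hdisj (Ne.symm hij)), map_zero,
        lp.single_apply_ne _ _ _ hij]
  exact ⟨A, B, hA, fun c => congrArg (fun T => T c) hBA, hBnorm⟩

theorem nonempty_prod_equiv_of_gliding_hump [CompleteSpace F] (hp : p ≠ ∞)
    {X : Submodule 𝕜 (Lp F p μ)} (hX : IsClosed (X : Set (Lp F p μ))) {I : ℕ → Set Ω}
    (hI : ∀ m, MeasurableSet (I m)) (hdisj : Pairwise (Function.onFun Disjoint I))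
    {u : ℕ → Lp F p μ} (hu : ∀ m, u m ∈ X) (hne : ∀ m, indicatorLp 𝕜 (hI m) (u m) ≠ 0)
    {ε : ℕ → ℝ} (hε : Summable ε) (hε_lt : ∑' m, ε m < 1)
    (hle : ∀ m, ‖u m - indicatorLp 𝕜 (hI m) (u m)‖ ≤ ε m * ‖indicatorLp 𝕜 (hI m) (u m)‖) :
    Nonempty ((X × 𝕜) ≃L[𝕜] X) := by
  let c (m : ℕ) : 𝕜 := ((‖indicatorLp 𝕜 (hI m) (u m)‖⁻¹ : ℝ) : 𝕜)
  have hc (m) : ‖c m‖ = ‖indicatorLp 𝕜 (hI m) (u m)‖⁻¹ := by simp [c]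
  obtain ⟨A, B, hA, hBA, hB⟩ := exists_lp_complemented_of_disjoint_support (𝕜 := 𝕜) hp hI hdisj
    (g := fun m => indicatorLp 𝕜 (hI m) (c m • u m))
    (fun m => indicatorLp_indicatorLp_of_subset _ _ subset_rfl _)
    (fun m => by rw [map_smul, norm_smul, hc, inv_mul_cancel₀ (norm_ne_zero_iff.2 (hne m))])
  have hdiff (m) : ‖c m • u m - A (lp.single p m 1)‖ ≤ ε m := by
    rw [hA, map_smul, ← smul_sub, norm_smul, hc,
      inv_mul_le_iff₀ (norm_pos_iff.2 (hne m)), mul_comm]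
    exact hle m
  have hsum := hε.of_nonneg_of_le (fun _ => norm_nonneg _) hdiff
  refine nonempty_prod_equiv_of_perturbation hp hX A B hBA
    (fun m => X.smul_mem (c m) (hu m)) hsum ?_
  calc ‖B‖ * ∑' m, ‖c m • u m - A (lp.single p m 1)‖
      ≤ 1 * ∑' m, ε m := mul_le_mul hB (hsum.tsum_le_tsum hdiff hε) (by positivity) zero_le_one
    _ < 1 := by rwa [one_mul]

end GlidingHump

section MonomialLp

open Classical in
/-- The monomial `t ↦ t ^ l` as an element of `L_p(μ)`, with the value `0` when it is not
`p`-integrable. -/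
noncomputable def monomialLp (p : ℝ≥0∞) (μ : Measure ℝ) (l : ℝ) : Lp ℝ p μ :=
  if h : MemLp (fun t : ℝ => t ^ l) p μ then h.toLp else 0

variable {p : ℝ≥0∞}

theorem monomialLp_eq_toLp {μ : Measure ℝ} {l : ℝ} (h : MemLp (fun t : ℝ => t ^ l) p μ) :
    monomialLp p μ l = h.toLp :=
  dif_pos h

theorem coeFn_monomialLp {l : ℝ} (hl : 0 ≤ l) :
    monomialLp p unitVolume l =ᵐ[unitVolume] fun t : ℝ => t ^ l := by
  rw [monomialLp_eq_toLp (memLp_rpow_unitVolume p hl)]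
  exact MemLp.coeFn_toLp _

theorem norm_linearCombination_monomialLp {l : ℕ → ℝ} (hl : ∀ k, 0 ≤ l k) (a : ℕ →₀ ℝ) :
    ‖Finsupp.linearCombination ℝ (fun k => monomialLp p unitVolume (l k)) a‖ =
      (eLpNorm (muntzPoly a.support l a) p unitVolume).toReal := by
  rw [Lp.norm_def, Finsupp.linearCombination_apply, Finsupp.sum]
  refine congrArg ENNReal.toReal (eLpNorm_congr_ae ?_)
  have hterm : ∀ᵐ t ∂unitVolume, ∀ k, (a k • monomialLp p unitVolume (l k) :
      Lp ℝ p unitVolume) t = a k * t ^ l k := ae_all_iff.2 fun k => by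
    filter_upwards [Lp.coeFn_smul (a k) (monomialLp p unitVolume (l k)),
      coeFn_monomialLp (p := p) (hl k)] with t hsmul hmono
    rw [hsmul, Pi.smul_apply, hmono, smul_eq_mul]
  filter_upwards [hterm, Lp.coeFn_finsetSum a.support
    fun k => a k • monomialLp p unitVolume (l k)] with t ht hsum
  rw [hsum, Finset.sum_apply]
  exact Finset.sum_congr rfl fun k _ => ht k

theorem norm_linearCombination_monomialLp_le {l l' : ℕ → ℝ} (hl : ∀ k, 0 ≤ l k)
    (hl' : ∀ k, 0 ≤ l' k) {C : ℝ≥0} {a : ℕ →₀ ℝ}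
    (hC : eLpNorm (muntzPoly a.support l a) p unitVolume ≤
      C * eLpNorm (muntzPoly a.support l' a) p unitVolume) :
    ‖Finsupp.linearCombination ℝ (fun k => monomialLp p unitVolume (l k)) a‖ ≤
      C * ‖Finsupp.linearCombination ℝ (fun k => monomialLp p unitVolume (l' k)) a‖ := by
  rw [norm_linearCombination_monomialLp hl, norm_linearCombination_monomialLp hl']
  refine (ENNReal.toReal_mono (ENNReal.mul_ne_top ENNReal.coe_ne_top
    (memLp_muntzPoly p (fun k _ => hl' k) a).2.ne) hC).trans_eq ?_
  rw [ENNReal.toReal_mul, ENNReal.coe_toReal]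

variable [Fact (1 ≤ p)]

theorem muntzSpace_eq_closure_span_monomialLp (S : Set ℝ) (a b : ℝ) : muntzSpace S p a b =
    (Submodule.span ℝ (monomialLp p (volume.restrict (Set.Icc a b)) '' S)).topologicalClosure := by
  refine congrArg Submodule.topologicalClosure (le_antisymm ?_ ?_) <;> rw [Submodule.span_le]
  · rintro g ⟨l, hl, hg⟩
    have hmem : MemLp (fun t : ℝ => t ^ l) p (volume.restrict (Set.Icc a b)) :=
      (Lp.memLp g).ae_eq hg
    refine Submodule.subset_span ⟨l, hl, ?_⟩
    rw [monomialLp_eq_toLp hmem]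
    exact Lp.ext (hmem.coeFn_toLp.trans hg.symm)
  · rintro _ ⟨l, hl, rfl⟩
    by_cases hmem : MemLp (fun t : ℝ => t ^ l) p (volume.restrict (Set.Icc a b))
    · rw [monomialLp_eq_toLp hmem]
      exact Submodule.subset_span ⟨l, hl, hmem.coeFn_toLp⟩
    · rw [monomialLp, dif_neg hmem]
      exact Submodule.zero_mem _

theorem monomialLp_mem_muntzSpace {S : Set ℝ} {l : ℝ} (hl : l ∈ S) (a b : ℝ) :
    monomialLp p (volume.restrict (Set.Icc a b)) l ∈ muntzSpace S p a b := by
  rw [muntzSpace_eq_closure_span_monomialLp]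
  exact Submodule.le_topologicalClosure _ (Submodule.subset_span (Set.mem_image_of_mem _ hl))

theorem topologicalClosure_sup_of_finiteDimensional {𝕜 E : Type*} [NontriviallyNormedField 𝕜]
    [CompleteSpace 𝕜] [NormedAddCommGroup E] [NormedSpace 𝕜 E] (X Y : Submodule 𝕜 E)
    [FiniteDimensional 𝕜 Y] :
    (X ⊔ Y).topologicalClosure = X.topologicalClosure ⊔ Y := by
  refine le_antisymm (Submodule.topologicalClosure_minimal _
    (sup_le_sup_right X.le_topologicalClosure Y)
    (Submodule.isClosed_sup_finiteDimensional _ _ X.isClosed_topologicalClosure)) (sup_le ?_ ?_)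
  · exact Submodule.topologicalClosure_mono le_sup_left
  · exact le_sup_right.trans (Submodule.le_topologicalClosure _)

theorem muntzSpace_insert (x : ℝ) (S : Set ℝ) (a b : ℝ) : muntzSpace (insert x S) p a b =
    muntzSpace S p a b ⊔ ℝ ∙ monomialLp p (volume.restrict (Set.Icc a b)) x := by
  rw [muntzSpace_eq_closure_span_monomialLp, muntzSpace_eq_closure_span_monomialLp,
    Set.image_insert_eq, Submodule.span_insert, sup_comm,
    topologicalClosure_sup_of_finiteDimensional]

theorem setLIntegral_Ico_monomialLp (hp : p ≠ ∞) {l a b : ℝ} (hl : 0 ≤ l) (ha : 0 ≤ a)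
    (hab : a ≤ b) (hb : b ≤ 1) :
    ∫⁻ t in Set.Ico a b, ‖monomialLp p unitVolume l t‖ₑ ^ p.toReal ∂unitVolume =
      ENNReal.ofReal ((b ^ (l * p.toReal + 1) - a ^ (l * p.toReal + 1)) / (l * p.toReal + 1)) := by
  have hq := toReal_pos_of_one_le hp
  have hsub : Set.Ico a b ⊆ Set.Icc 0 1 := fun t ht => ⟨ha.trans ht.1, ht.2.le.trans hb⟩
  have hint : ∫ t in Set.Ico a b, t ^ (l * p.toReal) =
      (b ^ (l * p.toReal + 1) - a ^ (l * p.toReal + 1)) / (l * p.toReal + 1) := by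
    rw [integral_Ico_eq_integral_Ioc, ← intervalIntegral.integral_of_le hab,
      integral_rpow (Or.inl (neg_one_lt_zero.trans_le (by positivity)))]
  rw [← hint, ofReal_integral_eq_lintegral_ofReal]
  · have hrestrict : unitVolume.restrict (Set.Ico a b) = volume.restrict (Set.Ico a b) :=
      Measure.restrict_restrict_of_subset hsub
    rw [← hrestrict]
    refine lintegral_congr_ae ?_
    filter_upwards [ae_restrict_of_ae (coeFn_monomialLp (p := p) hl),
      ae_restrict_mem measurableSet_Ico] with t ht htI
    have ht0 := ha.trans htI.1
    rw [ht, Real.enorm_of_nonneg (Real.rpow_nonneg ht0 l),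
      ENNReal.ofReal_rpow_of_nonneg (Real.rpow_nonneg ht0 l) hq.le, ← Real.rpow_mul ht0]
  · exact (intervalIntegral.intervalIntegrable_rpow' (neg_one_lt_zero.trans_le
      (by positivity))).1.mono_set_ae Ico_ae_eq_Ioc.le
  · filter_upwards [ae_restrict_mem measurableSet_Ico] with t ht
    exact Real.rpow_nonneg (ha.trans ht.1) _

theorem norm_indicatorLp_Ico_monomialLp_rpow (hp : p ≠ ∞) {l a b : ℝ} (hl : 0 ≤ l) (ha : 0 ≤ a)
    (hab : a ≤ b) (hb : b ≤ 1) :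
    ‖indicatorLp ℝ (measurableSet_Ico (a := a) (b := b)) (monomialLp p unitVolume l)‖ ^ p.toReal =
      (b ^ (l * p.toReal + 1) - a ^ (l * p.toReal + 1)) / (l * p.toReal + 1) := by
  have := toReal_pos_of_one_le hp
  have hpow : a ^ (l * p.toReal + 1) ≤ b ^ (l * p.toReal + 1) :=
    Real.rpow_le_rpow ha hab (by positivity)
  rw [← ENNReal.ofReal_eq_ofReal_iff (by positivity)
      (div_nonneg (sub_nonneg.2 hpow) (by positivity)),
    ofReal_norm_indicatorLp_rpow hp, setLIntegral_Ico_monomialLp hp hl ha hab hb]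

theorem norm_monomialLp_rpow (hp : p ≠ ∞) {l : ℝ} (hl : 0 ≤ l) :
    ‖monomialLp p unitVolume l‖ ^ p.toReal = 1 / (l * p.toReal + 1) := by
  have hq := toReal_pos_of_one_le hp
  have hIco : unitVolume.restrict (Set.Ico 0 1) = unitVolume := by
    rw [Measure.restrict_restrict_of_subset Set.Ico_subset_Icc_self]
    exact Measure.restrict_congr_set Ico_ae_eq_Icc
  have hint := setLIntegral_Ico_monomialLp hp hl le_rfl zero_le_one le_rfl
  rw [hIco, ← ofReal_norm_rpow_eq_lintegral hp, Real.one_rpow, Real.zero_rpow (by positivity),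
    sub_zero] at hint
  exact (ENNReal.ofReal_eq_ofReal_iff (by positivity) (by positivity)).1 hint

end MonomialLp

section GlidingHump

theorem eventually_exists_one_sub_rpow_sub_le {s δ : ℝ} (hs0 : 0 < s) (hs1 : s < 1) (hδ : 0 < δ) :
    ∀ᶠ e : ℝ in atTop, ∃ s' ∈ Set.Ioo s 1, 1 - (s' ^ e - s ^ e) ≤ δ * (s' ^ e - s ^ e) := by
  have hpow : Tendsto (fun e : ℝ => s ^ e) atTop (𝓝 0) :=
    tendsto_rpow_atTop_of_base_lt_one s (by linarith) hs1
  have hlim : Tendsto (fun e : ℝ => δ * (1 - s ^ e) - s ^ e) atTop (𝓝 δ) := by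
    simpa using ((hpow.const_sub 1).const_mul δ).sub hpow
  filter_upwards [hlim.eventually_const_lt hδ] with e he
  have hcont : Tendsto (fun s' : ℝ => δ * (s' ^ e - s ^ e) - (1 - (s' ^ e - s ^ e))) (𝓝[<] 1)
      (𝓝 (δ * (1 - s ^ e) - s ^ e)) := by
    have h1 : Tendsto (fun s' : ℝ => s' ^ e - s ^ e) (𝓝[<] 1) (𝓝 (1 - s ^ e)) := by
      simpa using ((Real.continuousAt_rpow_const 1 e (Or.inl one_ne_zero)).tendsto.mono_left
        nhdsWithin_le_nhds).sub_const (s ^ e)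
    simpa using (h1.const_mul δ).sub (h1.const_sub 1)
  obtain ⟨s', hlt, hs'⟩ :=
    ((hcont.eventually_const_lt he).and (Ioo_mem_nhdsLT hs1)).exists
  exact ⟨s', hs', by linarith⟩

variable {p : ℝ≥0∞} [Fact (1 ≤ p)]

theorem exists_norm_monomialLp_sub_indicatorLp_le (hp : p ≠ ∞) {S : Set ℝ} (hS : ¬BddAbove S)
    {s ε : ℝ} (hs : s ∈ Set.Ioo (0 : ℝ) 1) (hε : 0 < ε) :
    ∃ l ∈ S, ∃ s' ∈ Set.Ioo s 1,
      indicatorLp ℝ (measurableSet_Ico (a := s) (b := s')) (monomialLp p unitVolume l) ≠ 0 ∧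
      ‖monomialLp p unitVolume l -
          indicatorLp ℝ (measurableSet_Ico (a := s) (b := s')) (monomialLp p unitVolume l)‖ ≤
        ε * ‖indicatorLp ℝ (measurableSet_Ico (a := s) (b := s')) (monomialLp p unitVolume l)‖ := by
  have hq := toReal_pos_of_one_le hp
  obtain ⟨N, hN⟩ := eventually_atTop.1
    (eventually_exists_one_sub_rpow_sub_le hs.1 hs.2 (Real.rpow_pos_of_pos hε p.toReal))
  obtain ⟨l, hlS, hl⟩ := not_bddAbove_iff.1 hS (max 0 (N / p.toReal))
  have hl0 : 0 ≤ l := (le_max_left _ _).trans hl.le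
  have hNl : N < l * p.toReal := (div_lt_iff₀ hq).1 ((le_max_right _ _).trans_lt hl)
  obtain ⟨s', hs', hle⟩ := hN (l * p.toReal + 1) (by linarith)
  have hpow : s ^ (l * p.toReal + 1) < s' ^ (l * p.toReal + 1) :=
    Real.rpow_lt_rpow hs.1.le hs'.1 (by positivity)
  have hhump := norm_indicatorLp_Ico_monomialLp_rpow hp hl0 hs.1.le hs'.1.le hs'.2.le
  have hsplit := norm_indicatorLp_rpow_add_norm_sub_rpow (𝕜 := ℝ) hp
    (measurableSet_Ico (a := s) (b := s')) (monomialLp p unitVolume l)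
  rw [norm_monomialLp_rpow hp hl0, hhump] at hsplit
  refine ⟨l, hlS, s', hs', fun h0 => ?_, ?_⟩
  · rw [h0, norm_zero, Real.zero_rpow hq.ne'] at hhump
    exact (div_pos (sub_pos.2 hpow) (by positivity)).ne hhump
  · rw [← Real.rpow_le_rpow_iff (norm_nonneg _) (by positivity) hq,
      Real.mul_rpow hε.le (norm_nonneg _), hhump, eq_sub_of_add_eq' hsplit, ← sub_div,
      ← mul_div_assoc]
    gcongr

theorem nonempty_prod_equiv_of_monomialLp_mem (hp : p ≠ ∞)
    {X : Submodule ℝ (Lp ℝ p unitVolume)} (hX : IsClosed (X : Set (Lp ℝ p unitVolume)))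
    {S : Set ℝ} (hS : ¬BddAbove S) (hSX : ∀ l ∈ S, monomialLp p unitVolume l ∈ X) :
    Nonempty ((X × ℝ) ≃L[ℝ] X) := by
  choose l hl next hnext hne hle using fun (s : Set.Ioo (0 : ℝ) 1) (m : ℕ) =>
    exists_norm_monomialLp_sub_indicatorLp_le hp hS s.2 
      (show 0 < (1 / 4 : ℝ) * (1 / 2) ^ m by positivity)
  obtain ⟨σ, hσ⟩ : ∃ σ : ℕ → Set.Ioo (0 : ℝ) 1, ∀ m, (σ (m + 1) : ℝ) = next (σ m) m :=
    ⟨fun m => m.rec ⟨1 / 2, by norm_num⟩ fun m s =>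
      ⟨next s m, s.2.1.trans (hnext s m).1, (hnext s m).2⟩, fun _ => rfl⟩
  have hmono : Monotone fun m => (σ m).1 :=
    monotone_nat_of_le_succ fun m => (hnext (σ m) m).1.le.trans_eq (hσ m).symm
  have hdisj : Pairwise (Function.onFun Disjoint
      fun m => Set.Ico (σ m : ℝ) (next (σ m) m)) := by
    simp only [← hσ]
    exact hmono.pairwise_disjoint_on_Ico_succ
  have hgeom : HasSum (fun m : ℕ => (1 / 4 : ℝ) * (1 / 2) ^ m) (1 / 4 * 2) :=
    hasSum_geometric_two.mul_left _
  exact nonempty_prod_equiv_of_gliding_hump hp hX (fun _ => measurableSet_Ico) hdisj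
    (u := fun m => monomialLp p unitVolume (l (σ m) m)) (fun m => hSX _ (hl (σ m) m))
    (fun m => hne (σ m) m) hgeom.summable (by rw [hgeom.tsum_eq]; norm_num)
    fun m => hle (σ m) m

end GlidingHump

section MuntzSpace

variable {p : ℝ≥0∞} [Fact (1 ≤ p)]

theorem IsMuntzSeq.nonempty_muntzSpace_equiv_affine {Λ : ℕ → ℝ} (hΛ : IsMuntzSeq Λ)
    (hp : p ≠ ∞) {α β : ℝ} (hα : 0 < α) (hpos : ∀ k, 0 < α * Λ k + β) :
    Nonempty (muntzSpace (Set.range Λ) p 0 1 ≃L[ℝ]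
      muntzSpace (Set.range fun k => α * Λ k + β) p 0 1) := by
  have hinv : (fun k => α⁻¹ * (α * Λ k + β) + -(α⁻¹ * β)) = Λ := by
    funext k
    field_simp
    ring
  obtain ⟨C₁, hC₁⟩ := hΛ.exists_eLpNorm_muntzPoly_le_affine hα hpos Fact.out hp
  obtain ⟨C₂, hC₂⟩ := (hΛ.affine hα hpos).exists_eLpNorm_muntzPoly_le_affine (inv_pos.2 hα)
    (β := -(α⁻¹ * β)) (fun k => (hΛ.pos k).trans_eq (congrFun hinv k).symm) Fact.out hp
  rw [hinv] at hC₂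
  rw [muntzSpace_eq_closure_span_monomialLp, muntzSpace_eq_closure_span_monomialLp,
    ← Set.range_comp, ← Set.range_comp]
  have hΛ0 := fun k => (hΛ.pos k).le
  have hpos0 := fun k => (hpos k).le
  exact nonempty_closedSpan_equiv
    ⟨C₁, fun a => norm_linearCombination_monomialLp_le hΛ0 hpos0 (hC₁ a.support a)⟩
    ⟨C₂, fun a => norm_linearCombination_monomialLp_le hpos0 hΛ0 (hC₂ a.support a)⟩

theorem nonempty_muntzSpace_equiv_union (hp : p ≠ ∞) {S : Set ℝ} (hS : ¬BddAbove S)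
    (Ξ : Finset ℝ) :
    Nonempty (muntzSpace S p 0 1 ≃L[ℝ] muntzSpace (↑Ξ ∪ S) p 0 1) := by
  induction Ξ using Finset.induction_on with
  | empty =>
    rw [Finset.coe_empty, Set.empty_union]
    exact ⟨ContinuousLinearEquiv.refl ℝ _⟩
  | insert x Ξ _ ih =>
    obtain ⟨Φ⟩ := ih
    have hclosed : IsClosed (muntzSpace (↑Ξ ∪ S) p 0 1 : Set (Lp ℝ p unitVolume)) :=
      Submodule.isClosed_topologicalClosure _
    obtain ⟨Ψ⟩ := nonempty_equiv_sup_span_singleton hclosed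
      (nonempty_prod_equiv_of_monomialLp_mem hp hclosed hS fun l hl =>
        monomialLp_mem_muntzSpace (Or.inr hl) 0 1) (monomialLp p unitVolume x)
    rw [Finset.coe_insert, Set.insert_union, muntzSpace_insert]
    exact ⟨Φ.trans Ψ⟩

end MuntzSpace

theorem exists_isMuntzSeq_add {Λ : ℕ → ℝ} (hgap : ∃ c > 0, ∀ k, c ≤ Λ (k + 1) - Λ k)
    (hMuntz : Summable fun k => 1 / Λ k) {α : ℝ} (hα : 0 < α) (β : ℝ) :
    ∃ N, IsMuntzSeq (fun k => Λ (k + N)) ∧ ∀ k, 0 < α * Λ (k + N) + β := by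
  obtain ⟨c, hc, hc_le⟩ := hgap
  have hlim : Tendsto Λ atTop atTop := tendsto_atTop_of_gap hc hc_le
  obtain ⟨N, hN⟩ := eventually_atTop.1 ((hlim.eventually_gt_atTop 0).and
    (((hlim.const_mul_atTop hα).atTop_add tendsto_const_nhds).eventually_gt_atTop 0))
  refine ⟨N, ⟨fun k => (hN _ (N.le_add_left k)).1, ?_, ?_⟩, fun k => (hN _ (N.le_add_left k)).2⟩
  · exact ⟨c, hc, fun k => Nat.succ_add k N ▸ hc_le (k + N)⟩
  · exact (summable_nat_add_iff (f := fun k => 1 / Λ k) N).2 hMuntz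

theorem range_eq_coe_image_range_union {α : Type*} [DecidableEq α] (f : ℕ → α) (N : ℕ) :
    Set.range f = ↑((Finset.range N).image f) ∪ Set.range fun k => f (k + N) := by
  refine subset_antisymm ?_ (Set.union_subset ?_ (Set.range_comp_subset_range (· + N) f))
  · rintro _ ⟨n, rfl⟩
    rcases lt_or_ge n N with h | h
    · exact Or.inl (Finset.mem_image_of_mem f (Finset.mem_range.2 h))
    · exact Or.inr ⟨n - N, congrArg f (Nat.sub_add_cancel h)⟩
  · rw [Finset.coe_image]
    exact Set.image_subset_range _ _

theorem muntzSpace_isomorphic_union_affine_general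
    (Λ : ℕ → ℝ) (hgap : ∃ c > 0, ∀ k, c ≤ Λ (k + 1) - Λ k)
    (hMuntz : Summable fun k => 1 / Λ k)
    (p : ℝ≥0∞) [Fact (1 ≤ p)] (hp' : p ≠ ∞) (α β : ℝ) (hα : 0 < α) (Ξ : Finset ℝ) :
    Nonempty (muntzSpace (Set.range Λ) p 0 1 ≃L[ℝ]
      muntzSpace (↑Ξ ∪ (fun l => α * l + β) '' Set.range Λ) p 0 1) := by
  obtain ⟨N, hΛ, hpos⟩ := exists_isMuntzSeq_add hgap hMuntz hα β
  obtain ⟨Φ⟩ := nonempty_muntzSpace_equiv_union hp' hΛ.not_bddAbove_range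
    ((Finset.range N).image Λ)
  obtain ⟨Ψ⟩ := hΛ.nonempty_muntzSpace_equiv_affine hp' hα hpos
  obtain ⟨Θ⟩ := nonempty_muntzSpace_equiv_union hp' (hΛ.affine hα hpos).not_bddAbove_range
    (Ξ ∪ (Finset.range N).image fun k => α * Λ k + β)
  have himage : (fun l => α * l + β) '' Set.range Λ = Set.range fun k => α * Λ k + β :=
    (Set.range_comp _ _).symm
  rw [himage, range_eq_coe_image_range_union Λ N,
    range_eq_coe_image_range_union (fun k => α * Λ k + β) N, ← Set.union_assoc,
    ← Finset.coe_union]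
  exact ⟨Φ.symm.trans (Ψ.trans Θ)⟩

/-- For `Λ` strictly increasing positive with gap and Müntz conditions, `1 ≤ p < ∞`,
`β ≥ 0`, `α > 0` and a finite subset `Ξ` of `(0,∞)`, the Müntz spaces `M_{Λ,p}([0,1])`
and `M_{Ξ ∪ (αΛ+β),p}([0,1])` are linearly topologically isomorphic. -/
theorem muntzSpace_isomorphic_union_affine
    (Λ : ℕ → ℝ) (hpos : ∀ k, 0 < Λ k) (hmono : StrictMono Λ)
    (hgap : ∃ c > 0, ∀ k, c ≤ Λ (k + 1) - Λ k)
    (hMuntz : Summable fun k => 1 / Λ k)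
    (p : ℝ≥0∞) [Fact (1 ≤ p)] (hp' : p ≠ ∞)
    (α β : ℝ) (hα : 0 < α) (hβ : 0 ≤ β)
    (Ξ : Finset ℝ) (hΞ : ∀ x ∈ Ξ, 0 < x) :
    Nonempty (↥(muntzSpace (Set.range Λ) p 0 1) ≃L[ℝ]
      ↥(muntzSpace (↑Ξ ∪ (fun l => α * l + β) '' Set.range Λ) p 0 1)) :=
  muntzSpace_isomorphic_union_affine_general Λ hgap hMuntz p hp' α β hα Ξ
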